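/- Let α ∈ (0,π), γ ∈ (0,π/2], and B = (sin γ·cos(α/2), sin γ·sin(α/2), cos γ). Then lim_{τ→+∞} s(B;α,τ) = σ(arcsin(sin α·sin γ)). -/

import Mathlib

open Real MeasureTheory Set Filter

noncomputable section

namespace MagWedge

/-- The infinite sector `S_α := {(x₁,x₂) : |x₂| ≤ x₁·tan(α/2)}`. -/
def sector (α : ℝ) : Set (ℝ × ℝ) :=
  {x | |x.2| ≤ x.1 * Real.tan (α / 2)}

/-- The infinite wedge `W_α := S_α × ℝ` (coordinates `(x₁, x₂, x₃)`). -/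
def wedge (α : ℝ) : Set (ℝ × ℝ × ℝ) :=
  {x | |x.2.1| ≤ x.1 * Real.tan (α / 2)}

/-- The upper half-plane `Hp^up := {x₂ < x₁·tan(α/2)}`. -/
def hpUp (α : ℝ) : Set (ℝ × ℝ) :=
  {x | x.2 < x.1 * Real.tan (α / 2)}

/-- The lower half-plane `Hp^low := {x₂ > −x₁·tan(α/2)}`. -/
def hpLow (α : ℝ) : Set (ℝ × ℝ) :=
  {x | -(x.1 * Real.tan (α / 2)) < x.2}

/-- The magnetic/electric energy of `u` on a planar domain `Ω`, for magnetic field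
`(b₁,b₂,b₃)` (gauge `A̲ = (−x₂ b₃, 0)`) and Fourier parameter `τ`. -/
def energy2D (Ω : Set (ℝ × ℝ)) (b1 b2 b3 τ : ℝ) (u : ℝ × ℝ → ℂ) : ℝ :=
  ∫ x in Ω,
    ‖(-Complex.I) * fderiv ℝ u x (1, 0) + ((x.2 * b3 : ℝ) : ℂ) * u x‖ ^ 2
      + ‖fderiv ℝ u x (0, 1)‖ ^ 2
      + (x.1 * b2 - x.2 * b1 - τ) ^ 2 * ‖u x‖ ^ 2

/-- The squared `L²`-norm of `u` on a planar domain `Ω`. -/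
def norm2D (Ω : Set (ℝ × ℝ)) (u : ℝ × ℝ → ℂ) : ℝ := ∫ x in Ω, ‖u x‖ ^ 2

/-- The bottom of the spectrum of the Neumann realization of
`(−i∇−A̲)² + (x₁b₂−x₂b₁−τ)²` on `Ω`, via the Rayleigh quotient. -/
def specInf2D (Ω : Set (ℝ × ℝ)) (b1 b2 b3 τ : ℝ) : ℝ :=
  sInf { r : ℝ | ∃ u : ℝ × ℝ → ℂ, ContDiff ℝ (⊤ : ℕ∞) u ∧ HasCompactSupport u ∧
    0 < norm2D Ω u ∧ r = energy2D Ω b1 b2 b3 τ u / norm2D Ω u }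

/-- The band function `s(B;α,τ)` on the sector `S_α`. -/
def bandFn (α b1 b2 b3 τ : ℝ) : ℝ := specInf2D (sector α) b1 b2 b3 τ

/-- `Σ(B;α,τ,R)` : the Rayleigh quotient infimum over functions supported outside the
(closed Euclidean) ball of radius `R` centered at the origin. -/
def SigmaR (α b1 b2 b3 τ R : ℝ) : ℝ :=
  sInf { r : ℝ | ∃ u : ℝ × ℝ → ℂ, ContDiff ℝ (⊤ : ℕ∞) u ∧ HasCompactSupport u ∧
    (tsupport u ⊆ {x : ℝ × ℝ | R ^ 2 < x.1 ^ 2 + x.2 ^ 2}) ∧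
    0 < norm2D (sector α) u ∧
    r = energy2D (sector α) b1 b2 b3 τ u / norm2D (sector α) u }

/-- The bottom of the essential spectrum via Persson's characterization:
`s_ess(B;α,τ) = sup_{R>0} Σ(B;α,τ,R)`. -/
def sEss (α b1 b2 b3 τ : ℝ) : ℝ :=
  sSup { r : ℝ | ∃ R > (0 : ℝ), r = SigmaR α b1 b2 b3 τ R }

/-- The 3D magnetic energy on a domain `Ω ⊆ ℝ³` for the constant field `(b₁,b₂,b₃)`,
in the gauge `A = (−x₂b₃, 0, x₂b₁ − x₁b₂)`. -/
def energy3D (Ω : Set (ℝ × ℝ × ℝ)) (b1 b2 b3 : ℝ) (u : ℝ × ℝ × ℝ → ℂ) : ℝ :=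
  ∫ x in Ω,
    ‖(-Complex.I) * fderiv ℝ u x (1, 0, 0) + ((x.2.1 * b3 : ℝ) : ℂ) * u x‖ ^ 2
      + ‖fderiv ℝ u x (0, 1, 0)‖ ^ 2
      + ‖(-Complex.I) * fderiv ℝ u x (0, 0, 1) - ((x.2.1 * b1 : ℝ) : ℂ) * u x
          + ((x.1 * b2 : ℝ) : ℂ) * u x‖ ^ 2

/-- The squared `L²`-norm of `u` on a domain `Ω ⊆ ℝ³`. -/
def norm3D (Ω : Set (ℝ × ℝ × ℝ)) (u : ℝ × ℝ × ℝ → ℂ) : ℝ := ∫ x in Ω, ‖u x‖ ^ 2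

/-- `λ(B;W_α)` : the bottom of the spectrum of the Neumann magnetic Laplacian on the
wedge `W_α` with constant magnetic field `B = (b₁,b₂,b₃)`. -/
def lambdaWedge (α b1 b2 b3 : ℝ) : ℝ :=
  sInf { r : ℝ | ∃ u : ℝ × ℝ × ℝ → ℂ, ContDiff ℝ (⊤ : ℕ∞) u ∧ HasCompactSupport u ∧
    0 < norm3D (wedge α) u ∧ r = energy3D (wedge α) b1 b2 b3 u / norm3D (wedge α) u }

/-- The de Gennes function `μ₁(ξ)`: bottom of the spectrum of the Neumann realization of
`−d²/dt² + (t−ξ)²` on the half-line. -/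
def deGennes (ξ : ℝ) : ℝ :=
  sInf { r : ℝ | ∃ u : ℝ → ℂ, ContDiff ℝ (⊤ : ℕ∞) u ∧ HasCompactSupport u ∧
    (0 < ∫ t in Ioi (0 : ℝ), ‖u t‖ ^ 2) ∧
    r = (∫ t in Ioi (0 : ℝ), ‖deriv u t‖ ^ 2 + (t - ξ) ^ 2 * ‖u t‖ ^ 2) /
        (∫ t in Ioi (0 : ℝ), ‖u t‖ ^ 2) }

/-- `Θ₀ := inf_ξ μ₁(ξ)`. -/
def Theta0 : ℝ := ⨅ ξ : ℝ, deGennes ξ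

/-- The half-space `{(s,t,z) : t > 0}` in ℝ³. -/
def halfSpace3 : Set (ℝ × ℝ × ℝ) := {x | 0 < x.2.1}

/-- `σ(θ)` : the bottom of the spectrum of the Neumann magnetic Laplacian on the half-space
with a unit magnetic field making angle `θ` with the boundary. -/
def sigmaHS (θ : ℝ) : ℝ :=
  sInf { r : ℝ | ∃ u : ℝ × ℝ × ℝ → ℂ, ContDiff ℝ (⊤ : ℕ∞) u ∧ HasCompactSupport u ∧
    (0 < ∫ x in halfSpace3, ‖u x‖ ^ 2) ∧
    r = (∫ x in halfSpace3,
          ‖fderiv ℝ u x (1, 0, 0)‖ ^ 2 + ‖fderiv ℝ u x (0, 1, 0)‖ ^ 2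
            + ‖(-Complex.I) * fderiv ℝ u x (0, 0, 1)
                - ((x.2.1 * Real.cos θ : ℝ) : ℂ) * u x
                + ((x.1 * Real.sin θ : ℝ) : ℂ) * u x‖ ^ 2) /
        (∫ x in halfSpace3, ‖u x‖ ^ 2) }

/-- `μ(α)` : the bottom of the spectrum of the magnetic Neumann Laplacian on the sector
`S_α` with unit constant (scalar) magnetic field. -/
def muSector (α : ℝ) : ℝ :=
  sInf { r : ℝ | ∃ u : ℝ × ℝ → ℂ, ContDiff ℝ (⊤ : ℕ∞) u ∧ HasCompactSupport u ∧
    0 < norm2D (sector α) u ∧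
    r = (∫ x in sector α,
          ‖(-Complex.I) * fderiv ℝ u x (1, 0) + (x.2 : ℂ) * u x‖ ^ 2
            + ‖fderiv ℝ u x (0, 1)‖ ^ 2) / norm2D (sector α) u }

end MagWedge

/-!
Write `σ` for the ground energy on the half-space bounded by the lower face of the wedge. The field
is tangent to the upper face, so `V = x₁ b₂ - x₂ b₁` vanishes on that face, is positive inside the
sector and grows along the lower face. A partial Fourier transform along the axis of the wedge turns
the half-space problem into the family `(-i∇ + A)² + (V - τ)²` on the planar half-plane above the
lower side of the sector; as a magnetic translation along this side changes `τ`, each member of the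
family has ground energy `σ`.

A translation far along the lower side moves an almost optimal half-plane state into the sector,
which bounds the band function from above for large `τ`. For the lower bound, an IMS partition of
unity in the variable `V / τ` splits a state into a part on which `(V - τ)²` is large and a part
which vanishes near the upper side, hence is admissible on the half-plane; the localisation error
is `O(τ⁻²)`.
-/

namespace MagWedge

open Complex (I)
open scoped Topology FourierTransform ContDiff

/-- The gauge transform `e^{-iφ} u`. -/
def gauge {E : Type*} (φ : E → ℝ) (u : E → ℂ) (x : E) : ℂ := Complex.exp (-(φ x * I)) * u x

lemma norm_exp_neg_ofReal_mul_I (r : ℝ) : ‖Complex.exp (-(r * I))‖ = 1 := by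
  simpa using Complex.norm_exp_ofReal_mul_I (-r)

lemma norm_gauge {E : Type*} (φ : E → ℝ) (u : E → ℂ) (x : E) : ‖gauge φ u x‖ = ‖u x‖ := by
  rw [gauge, norm_mul, norm_exp_neg_ofReal_mul_I, one_mul]

section CovariantDerivative

variable {E F : Type*} [NormedAddCommGroup E] [NormedSpace ℝ E]
  [NormedAddCommGroup F] [NormedSpace ℝ F]

/-- The covariant derivative `(-i∇ + A) u` for a magnetic potential `A`, encoded as a `1`-form
on `E`; its value at `e` is the derivative in direction `e`. -/
def covDeriv (A : E → E →L[ℝ] ℝ) (u : E → ℂ) (x : E) : E →L[ℝ] ℂ :=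
  (-I) • fderiv ℝ u x + (A x).smulRight (u x)

variable {A : E → E →L[ℝ] ℝ} {u : E → ℂ} {x : E}

lemma covDeriv_apply (e : E) : covDeriv A u x e = -I * fderiv ℝ u x e + A x e * u x := by
  simp [covDeriv]

lemma covDeriv_gauge {φ : E → ℝ} (hφ : DifferentiableAt ℝ φ x) (hu : DifferentiableAt ℝ u x) :
    covDeriv (fun y => A y + fderiv ℝ φ y) (gauge φ u) x
      = Complex.exp (-(φ x * I)) • covDeriv A u x := by
  have hphase : HasFDerivAt (fun y => Complex.exp (-(φ y * I)))
      (Complex.exp (-(φ x * I)) • -(I • Complex.ofRealCLM.comp (fderiv ℝ φ x))) x :=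
    ((Complex.ofRealCLM.hasFDerivAt.comp x hφ.hasFDerivAt).mul_const I).neg.cexp
  have hgauge : HasFDerivAt (gauge φ u) _ x := hphase.mul hu.hasFDerivAt
  ext e
  rw [covDeriv_apply, hgauge.fderiv, gauge]
  simp only [add_apply, smul_apply, covDeriv_apply,
    neg_apply, ContinuousLinearMap.comp_apply, Complex.ofRealCLM_apply,
    smul_eq_mul, Complex.ofReal_add]
  linear_combination Complex.exp (-(φ x * I)) * u x * fderiv ℝ φ x e * Complex.I_mul_I

lemma norm_covDeriv_gauge {φ : E → ℝ} (hφ : DifferentiableAt ℝ φ x)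
    (hu : DifferentiableAt ℝ u x) (e : E) :
    ‖covDeriv (fun y => A y + fderiv ℝ φ y) (gauge φ u) x e‖ = ‖covDeriv A u x e‖ := by
  rw [covDeriv_gauge hφ hu, smul_apply, norm_smul,
    norm_exp_neg_ofReal_mul_I, one_mul]

lemma covDeriv_comp {A : F → F →L[ℝ] ℝ} {u : F → ℂ} {f : E → F}
    (hf : DifferentiableAt ℝ f x) (hu : DifferentiableAt ℝ u (f x)) :
    covDeriv (fun y => (A (f y)).comp (fderiv ℝ f y)) (u ∘ f) x
      = (covDeriv A u (f x)).comp (fderiv ℝ f x) := by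
  ext e
  simp [covDeriv_apply, fderiv_comp x hu hf]

lemma covDeriv_mul {g : E → ℝ} (hg : DifferentiableAt ℝ g x) (hu : DifferentiableAt ℝ u x)
    (e : E) :
    covDeriv A (fun y => (g y : ℂ) * u y) x e
      = g x * covDeriv A u x e - fderiv ℝ g x e * u x * I := by
  have hgu : HasFDerivAt (fun y => (g y : ℂ) * u y) _ x :=
    (Complex.ofRealCLM.hasFDerivAt.comp x hg.hasFDerivAt).mul hu.hasFDerivAt
  rw [covDeriv_apply, hgu.fderiv]
  simp only [covDeriv_apply, add_apply, smul_apply,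
    ContinuousLinearMap.comp_apply, Complex.ofRealCLM_apply, smul_eq_mul, Function.comp_apply]
  ring

/-- The cross terms of the two rotated covariant derivatives cancel because `cos² + sin² = 1`. -/
lemma norm_sq_covDeriv_cos_add_sin {f : E → ℝ} (hf : DifferentiableAt ℝ f x)
    (hu : DifferentiableAt ℝ u x) (e : E) :
    ‖covDeriv A (fun y => (Real.cos (f y) : ℂ) * u y) x e‖ ^ 2
        + ‖covDeriv A (fun y => (Real.sin (f y) : ℂ) * u y) x e‖ ^ 2
      = ‖covDeriv A u x e‖ ^ 2 + fderiv ℝ f x e ^ 2 * ‖u x‖ ^ 2 := by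
  rw [covDeriv_mul hf.cos hu, covDeriv_mul hf.sin hu, fderiv_cos hf, fderiv_sin hf]
  simp only [Complex.sq_norm, Complex.normSq_apply, smul_apply, smul_eq_mul,
    Complex.sub_re, Complex.sub_im, Complex.mul_re, Complex.mul_im, Complex.ofReal_re,
    Complex.ofReal_im, Complex.I_re, Complex.I_im]
  linear_combination ((covDeriv A u x e).re ^ 2 + (covDeriv A u x e).im ^ 2
    + fderiv ℝ f x e ^ 2 * ((u x).re ^ 2 + (u x).im ^ 2)) * Real.sin_sq_add_cos_sq (f x)

end CovariantDerivative

section TestFunction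

variable {E F : Type*} [NormedAddCommGroup E] [NormedSpace ℝ E]
  [NormedAddCommGroup F] [NormedSpace ℝ F]

/-- Test functions: smooth functions with compact support. -/
structure IsTestFunction (u : E → F) : Prop where
  contDiff : ContDiff ℝ ∞ u
  hasCompactSupport : HasCompactSupport u

lemma isTestFunction_iff {u : E → F} :
    IsTestFunction u ↔ ContDiff ℝ ∞ u ∧ HasCompactSupport u :=
  ⟨fun h => ⟨h.1, h.2⟩, fun h => ⟨h.1, h.2⟩⟩

namespace IsTestFunction

lemma continuous {u : E → F} (hu : IsTestFunction u) : Continuous u := hu.contDiff.continuous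

lemma differentiable {u : E → F} (hu : IsTestFunction u) : Differentiable ℝ u :=
  hu.contDiff.differentiable (by simp)

lemma mul {g u : E → ℂ} (hu : IsTestFunction u) (hg : ContDiff ℝ ∞ g) :
    IsTestFunction (fun x => g x * u x) :=
  ⟨hg.mul hu.contDiff, hu.hasCompactSupport.mul_left⟩

lemma ofReal_mul {g : E → ℝ} {u : E → ℂ} (hu : IsTestFunction u) (hg : ContDiff ℝ ∞ g) :
    IsTestFunction (fun x => (g x : ℂ) * u x) :=
  hu.mul (Complex.ofRealCLM.contDiff.comp hg)

lemma add {u v : E → F} (hu : IsTestFunction u) (hv : IsTestFunction v) :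
    IsTestFunction (fun x => u x + v x) :=
  ⟨hu.contDiff.add hv.contDiff, hu.hasCompactSupport.add hv.hasCompactSupport⟩

lemma gauge {u : E → ℂ} (hu : IsTestFunction u) {φ : E → ℝ} (hφ : ContDiff ℝ ∞ φ) :
    IsTestFunction (gauge φ u) :=
  hu.mul ((Complex.ofRealCLM.contDiff.comp hφ).mul contDiff_const).neg.cexp

lemma comp {G : Type*} [NormedAddCommGroup G] [NormedSpace ℝ G] {u : F → G}
    (hu : IsTestFunction u) (f : E ≃ₜ F) (hf : ContDiff ℝ ∞ f) : IsTestFunction (u ∘ f) :=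
  ⟨hu.contDiff.comp hf, hu.hasCompactSupport.comp_homeomorph f⟩

lemma fderiv {u : E → F} (hu : IsTestFunction u) : IsTestFunction (_root_.fderiv ℝ u) :=
  ⟨hu.contDiff.fderiv_right le_rfl, hu.hasCompactSupport.fderiv ℝ⟩

lemma fderiv_apply {u : E → F} (hu : IsTestFunction u) (e : E) :
    IsTestFunction (fun x => _root_.fderiv ℝ u x e) :=
  ⟨hu.fderiv.contDiff.clm_apply contDiff_const,
    hu.hasCompactSupport.fderiv_apply ℝ e⟩

variable [MeasurableSpace E] [BorelSpace E] {μ : Measure E} [IsFiniteMeasureOnCompacts μ]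

lemma integrable {u : E → F} (hu : IsTestFunction u) : Integrable u μ :=
  hu.continuous.integrable_of_hasCompactSupport hu.hasCompactSupport

lemma integrable_norm_sq {u : E → F} (hu : IsTestFunction u) :
    Integrable (fun x => ‖u x‖ ^ 2) μ :=
  (hu.continuous.norm.pow 2).integrable_of_hasCompactSupport <|
    HasCompactSupport.intro hu.hasCompactSupport fun _ hx => by
      simp [image_eq_zero_of_notMem_tsupport hx]

end IsTestFunction

end TestFunction

section EnergyDensity

variable {E ι κ : Type*} [NormedAddCommGroup E] [NormedSpace ℝ E] [Fintype ι] [Fintype κ]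
  {A : E → E →L[ℝ] ℝ} {V : E → ℝ} {e : ι → E} {u : E → ℂ}

/-- The energy density of the Schrödinger operator `(-i∇ + A)² + V²`, the kinetic part being
measured along the vectors of the frame `e`. -/
def energyDensity (A : E → E →L[ℝ] ℝ) (V : E → ℝ) (e : ι → E) (u : E → ℂ) (x : E) : ℝ :=
  ∑ i, ‖covDeriv A u x (e i)‖ ^ 2 + V x ^ 2 * ‖u x‖ ^ 2

lemma energyDensity_nonneg (u : E → ℂ) (x : E) : 0 ≤ energyDensity A V e u x := by
  unfold energyDensity
  positivity

lemma energyDensity_congr_frame {e' : κ → E}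
    (h : ∀ T : E →L[ℝ] ℂ, ∑ i, ‖T (e i)‖ ^ 2 = ∑ j, ‖T (e' j)‖ ^ 2) :
    energyDensity A V e = energyDensity A V e' := by
  funext u x
  rw [energyDensity, energyDensity, h]

lemma covDeriv_eq_zero_of_notMem_tsupport {x : E} (hx : x ∉ tsupport u) :
    covDeriv A u x = 0 := by
  ext d
  simp [covDeriv, fderiv_of_notMem_tsupport ℝ hx, image_eq_zero_of_notMem_tsupport hx]

lemma energyDensity_eq_zero_of_notMem_tsupport {x : E} (hx : x ∉ tsupport u) :
    energyDensity A V e u x = 0 := by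
  simp [energyDensity, covDeriv_eq_zero_of_notMem_tsupport hx, image_eq_zero_of_notMem_tsupport hx]

lemma continuous_covDeriv_apply (hA : Continuous A) (hu : IsTestFunction u) (d : E) :
    Continuous (fun x => covDeriv A u x d) := by
  simp only [covDeriv_apply]
  exact ((hu.fderiv_apply d).continuous.const_mul _).add
    ((Complex.continuous_ofReal.comp (hA.clm_apply continuous_const)).mul hu.continuous)

lemma continuous_energyDensity (hA : Continuous A) (hV : Continuous V) (hu : IsTestFunction u) :
    Continuous (energyDensity A V e u) :=
  (continuous_finsetSum _ fun i _ => (continuous_covDeriv_apply hA hu (e i)).norm.pow 2).add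
    ((hV.pow 2).mul (hu.continuous.norm.pow 2))

lemma integrable_energyDensity [MeasurableSpace E] [BorelSpace E] {μ : Measure E}
    [IsFiniteMeasureOnCompacts μ] (hA : Continuous A) (hV : Continuous V)
    (hu : IsTestFunction u) : Integrable (energyDensity A V e u) μ :=
  (continuous_energyDensity hA hV hu).integrable_of_hasCompactSupport <|
    HasCompactSupport.of_support_subset_isCompact hu.hasCompactSupport fun _ hx => by
      contrapose! hx
      simpa using energyDensity_eq_zero_of_notMem_tsupport hx

lemma energyDensity_gauge {φ : E → ℝ} (hφ : Differentiable ℝ φ) (hu : Differentiable ℝ u) :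
    energyDensity (fun x => A x + fderiv ℝ φ x) V e (gauge φ u) = energyDensity A V e u := by
  funext x
  simp only [energyDensity, norm_gauge, norm_covDeriv_gauge (hφ x) (hu x)]

lemma energyDensity_comp_continuousLinearEquiv {F : Type*} [NormedAddCommGroup F]
    [NormedSpace ℝ F] {A : F → F →L[ℝ] ℝ} {V : F → ℝ} {u : F → ℂ} (hu : Differentiable ℝ u)
    (L : E ≃L[ℝ] F) (x : E) :
    energyDensity (fun y => (A (L y)).comp (L : E →L[ℝ] F)) (V ∘ L) e (u ∘ L) x
      = energyDensity A V (L ∘ e) u (L x) := by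
  have hcov := covDeriv_comp (A := A) (L.differentiableAt (x := x)) (hu (L x))
  simp only [L.fderiv] at hcov
  simp only [energyDensity, hcov, Function.comp_apply, ContinuousLinearMap.comp_apply,
    ContinuousLinearEquiv.coe_coe]

/-- The IMS localisation formula. -/
lemma energyDensity_cos_add_sin {f : E → ℝ} (hf : Differentiable ℝ f)
    (hu : Differentiable ℝ u) (x : E) :
    energyDensity A V e (fun y => (Real.cos (f y) : ℂ) * u y) x
        + energyDensity A V e (fun y => (Real.sin (f y) : ℂ) * u y) x
      = energyDensity A V e u x + (∑ i, fderiv ℝ f x (e i) ^ 2) * ‖u x‖ ^ 2 := by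
  have hkin := Finset.sum_congr (rfl : (Finset.univ : Finset ι) = Finset.univ) fun i _ =>
    norm_sq_covDeriv_cos_add_sin (A := A) (hf x) (hu x) (e i)
  rw [Finset.sum_add_distrib, Finset.sum_add_distrib, ← Finset.sum_mul] at hkin
  simp only [energyDensity, norm_mul, Complex.norm_real, mul_pow, Real.norm_eq_abs, sq_abs]
  linear_combination hkin + V x ^ 2 * ‖u x‖ ^ 2 * Real.sin_sq_add_cos_sq (f x)

lemma integral_energyDensity_cos_add_sin_le [MeasurableSpace E] [BorelSpace E] {μ : Measure E}
    [IsFiniteMeasureOnCompacts μ] (hA : Continuous A) (hV : Continuous V) {f : E → ℝ} {C : ℝ}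
    (hf : ContDiff ℝ ∞ f) (hC : ∀ x, ∑ i, fderiv ℝ f x (e i) ^ 2 ≤ C) (hu : IsTestFunction u) :
    ∫ x, energyDensity A V e (fun y => (Real.cos (f y) : ℂ) * u y) x ∂μ
        + ∫ x, energyDensity A V e (fun y => (Real.sin (f y) : ℂ) * u y) x ∂μ
      ≤ ∫ x, energyDensity A V e u x ∂μ + C * ∫ x, ‖u x‖ ^ 2 ∂μ := by
  have hcos := integrable_energyDensity (e := e) (μ := μ) hA hV (hu.ofReal_mul hf.cos)
  have hsin := integrable_energyDensity (e := e) (μ := μ) hA hV (hu.ofReal_mul hf.sin)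
  have hright := (integrable_energyDensity (e := e) (μ := μ) hA hV hu).add
    (hu.integrable_norm_sq.const_mul C)
  rw [← integral_add hcos hsin, ← integral_const_mul,
    ← integral_add (integrable_energyDensity hA hV hu) (hu.integrable_norm_sq.const_mul C)]
  refine integral_mono (hcos.add hsin) hright fun x => ?_
  simp only [energyDensity_cos_add_sin (hf.differentiable (by simp)) hu.differentiable]
  gcongr
  exact hC x

lemma integral_norm_sq_cos_add_sin [MeasurableSpace E] [BorelSpace E] {μ : Measure E}
    [IsFiniteMeasureOnCompacts μ] {f : E → ℝ} (hf : ContDiff ℝ ∞ f) (hu : IsTestFunction u) :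
    ∫ x, ‖(Real.cos (f x) : ℂ) * u x‖ ^ 2 ∂μ + ∫ x, ‖(Real.sin (f x) : ℂ) * u x‖ ^ 2 ∂μ
      = ∫ x, ‖u x‖ ^ 2 ∂μ := by
  rw [← integral_add (hu.ofReal_mul hf.cos).integrable_norm_sq
    (hu.ofReal_mul hf.sin).integrable_norm_sq]
  simp only [norm_mul, mul_pow, Complex.norm_real, Real.norm_eq_abs, sq_abs, ← add_mul,
    Real.cos_sq_add_sin_sq, one_mul]

end EnergyDensity

section RayleighInf

variable {E F : Type*} [NormedAddCommGroup E] [NormedSpace ℝ E] [MeasurableSpace E]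
  [NormedAddCommGroup F] [NormedSpace ℝ F] [MeasurableSpace F]

/-- The Rayleigh quotients `∫ ρ u ∂μ / ∫ ‖u‖² ∂μ` of test functions, for an energy density `ρ`.
Neumann conditions on a domain `Ω` are encoded by restricting `μ` to `Ω` while `u` ranges over test
functions of the whole space. -/
def rayleighQuotients (μ : Measure E) (ρ : (E → ℂ) → E → ℝ) : Set ℝ :=
  {r | ∃ u : E → ℂ, IsTestFunction u ∧ 0 < ∫ x, ‖u x‖ ^ 2 ∂μ ∧
    r = (∫ x, ρ u x ∂μ) / ∫ x, ‖u x‖ ^ 2 ∂μ}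

/-- The bottom of the spectrum, as the infimum of the Rayleigh quotients. -/
def rayleighInf (μ : Measure E) (ρ : (E → ℂ) → E → ℝ) : ℝ := sInf (rayleighQuotients μ ρ)

variable {μ : Measure E} {ν : Measure F} {ρ : (E → ℂ) → E → ℝ} {ρ' : (F → ℂ) → F → ℝ}

lemma rayleighQuotients_subset (T : (E → ℂ) → F → ℂ)
    (hT : ∀ u, IsTestFunction u → IsTestFunction (T u))
    (henergy : ∀ u, IsTestFunction u → ∫ y, ρ' (T u) y ∂ν = ∫ x, ρ u x ∂μ)
    (hnorm : ∀ u, ∫ y, ‖T u y‖ ^ 2 ∂ν = ∫ x, ‖u x‖ ^ 2 ∂μ) :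
    rayleighQuotients μ ρ ⊆ rayleighQuotients ν ρ' := by
  rintro _ ⟨u, hu, hpos, rfl⟩
  exact ⟨T u, hT u hu, by rwa [hnorm], by rw [henergy u hu, hnorm]⟩

lemma exists_isTestFunction_norm_pos (𝕜 : Type*) [RCLike 𝕜] [FiniteDimensional ℝ E]
    [BorelSpace E] [IsLocallyFiniteMeasure μ] [NeZero μ] :
    ∃ u : E → 𝕜, IsTestFunction u ∧ 0 < ∫ x, ‖u x‖ ^ 2 ∂μ := by
  obtain ⟨x₀, -, hx₀⟩ := exists_mem_forall_mem_nhdsWithin_pos_measure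
    (NeZero.ne (μ univ) : μ univ ≠ 0)
  let f : ContDiffBump x₀ := default
  have hf : IsTestFunction (fun x => (f x : 𝕜)) :=
    ⟨(RCLike.ofRealCLM (K := 𝕜)).contDiff.comp f.contDiff,
      f.hasCompactSupport.comp_left (g := ((↑) : ℝ → 𝕜)) RCLike.ofReal_zero⟩
  refine ⟨_, hf, (integral_pos_iff_support_of_nonneg (fun _ => by positivity)
    hf.integrable_norm_sq).2 (hx₀ _ ?_)⟩
  refine mem_nhdsWithin_of_mem_nhds (mem_of_superset (f.support_eq ▸
    Metric.ball_mem_nhds x₀ f.rOut_pos) fun x hx => ?_)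
  simpa using hx

lemma rayleighInf_mul_le (hρ : ∀ u x, 0 ≤ ρ u x) {u : E → ℂ} (hu : IsTestFunction u) :
    rayleighInf μ ρ * ∫ x, ‖u x‖ ^ 2 ∂μ ≤ ∫ x, ρ u x ∂μ := by
  rcases (integral_nonneg fun x => by positivity : 0 ≤ ∫ x, ‖u x‖ ^ 2 ∂μ).eq_or_lt with
    hzero | hpos
  · rw [← hzero, mul_zero]
    exact integral_nonneg (hρ u)
  · have hbdd : BddBelow (rayleighQuotients μ ρ) := by
      refine ⟨0, ?_⟩
      rintro _ ⟨v, -, hv, rfl⟩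
      exact div_nonneg (integral_nonneg (hρ v)) hv.le
    rw [← le_div_iff₀ hpos]
    exact csInf_le hbdd ⟨u, hu, hpos, rfl⟩

lemma le_rayleighInf_iff [FiniteDimensional ℝ E] [BorelSpace E] [IsLocallyFiniteMeasure μ]
    [NeZero μ] (hρ : ∀ u x, 0 ≤ ρ u x) {K : ℝ} :
    K ≤ rayleighInf μ ρ ↔
      ∀ u, IsTestFunction u → K * ∫ x, ‖u x‖ ^ 2 ∂μ ≤ ∫ x, ρ u x ∂μ := by
  refine ⟨fun hK u hu => (mul_le_mul_of_nonneg_right hK <| integral_nonneg fun x => by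
    positivity).trans (rayleighInf_mul_le hρ hu), fun h => ?_⟩
  obtain ⟨u₀, hu₀, hpos₀⟩ := exists_isTestFunction_norm_pos (μ := μ) ℂ
  refine le_csInf ⟨_, u₀, hu₀, hpos₀, rfl⟩ ?_
  rintro _ ⟨u, hu, hpos, rfl⟩
  exact (le_div_iff₀ hpos).2 (h u hu)

variable {ι : Type*} [Fintype ι] {V : E → ℝ} {e : ι → E}

lemma rayleighInf_gauge (A : E → E →L[ℝ] ℝ) {φ : E → ℝ} (hφ : ContDiff ℝ ∞ φ) :
    rayleighInf μ (energyDensity (fun x => A x + fderiv ℝ φ x) V e)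
      = rayleighInf μ (energyDensity A V e) := by
  have hsub : ∀ (A : E → E →L[ℝ] ℝ) {φ : E → ℝ}, ContDiff ℝ ∞ φ →
      rayleighQuotients μ (energyDensity A V e)
        ⊆ rayleighQuotients μ (energyDensity (fun x => A x + fderiv ℝ φ x) V e) :=
    fun A φ hφ => rayleighQuotients_subset (gauge φ) (fun u hu => hu.gauge hφ)
      (fun u hu => by
        rw [energyDensity_gauge (hφ.differentiable (by simp)) hu.differentiable])
      (fun u => by simp only [norm_gauge])
  refine congrArg sInf ((hsub A hφ).antisymm' ?_)
  simpa only [fderiv_fun_neg, add_neg_cancel_right]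
    using hsub (fun x => A x + fderiv ℝ φ x) hφ.neg

/-- The energy only depends on the curl of a linear potential: the difference of two potentials with
the same curl is a symmetric bilinear form `B`, the gradient of `x ↦ B x x / 2`. -/
lemma rayleighInf_congr_curl {A A' : E →L[ℝ] E →L[ℝ] ℝ}
    (hcurl : ∀ x y, A' x y - A' y x = A x y - A y x) :
    rayleighInf μ (energyDensity A' V e) = rayleighInf μ (energyDensity A V e) := by
  obtain ⟨B, rfl⟩ : ∃ B, A' = A + B := ⟨A' - A, (add_sub_cancel A A').symm⟩
  have hsymm : ∀ x y, B y x = B x y := fun x y => by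
    have := hcurl x y
    simp only [add_apply] at this
    linear_combination -this
  have hgrad : ∀ x, fderiv ℝ (fun y => B y y / 2) x = B x := fun x => by
    have h : HasFDerivAt (fun y => B y y / 2) _ x :=
      ((B.hasFDerivAt (x := x)).clm_apply (hasFDerivAt_id x)).mul_const (2⁻¹ : ℝ)
    ext d
    rw [h.fderiv]
    simp [hsymm x d]
    ring
  rw [← rayleighInf_gauge A (φ := fun y => B y y / 2)
    ((B.contDiff.clm_apply contDiff_id).div_const 2)]
  simp only [hgrad, FunLike.coe_add, Pi.add_def]

lemma rayleighInf_comp_continuousLinearEquiv [BorelSpace E] [BorelSpace F]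
    {A : F → F →L[ℝ] ℝ} {V : F → ℝ} (L : E ≃L[ℝ] F) (hL : MeasurePreserving L μ ν) :
    rayleighInf μ (energyDensity (fun x => (A (L x)).comp (L : E →L[ℝ] F)) (V ∘ L) e)
      = rayleighInf ν (energyDensity A V (L ∘ e)) := by
  have hint : ∀ f : F → ℝ, ∫ x, f (L x) ∂μ = ∫ y, f y ∂ν :=
    hL.integral_comp L.toHomeomorph.measurableEmbedding
  refine congrArg sInf (Subset.antisymm ?_ ?_)
  · refine rayleighQuotients_subset (· ∘ L.symm)
      (fun u hu => hu.comp L.symm.toHomeomorph L.symm.contDiff) (fun u hu => ?_) fun u => ?_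
    · rw [← hint]
      refine integral_congr_ae (ae_of_all _ fun x => ?_)
      have hcomp := energyDensity_comp_continuousLinearEquiv (A := A) (V := V) (e := e)
        (u := u ∘ L.symm) (hu.differentiable.comp L.symm.differentiable) L x
      simp only [← hcomp, Function.comp_assoc, L.symm_comp_self, Function.comp_id]
    · rw [← hint]
      simp
  · refine rayleighQuotients_subset (· ∘ L)
      (fun u hu => hu.comp L.toHomeomorph L.contDiff) (fun u hu => ?_) fun u => hint (‖u ·‖ ^ 2)
    simp only [energyDensity_comp_continuousLinearEquiv hu.differentiable, hint]

end RayleighInf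

section Slices

variable {E F : Type*} [NormedAddCommGroup E] [NormedAddCommGroup F] {G : E × ℝ → F}

lemma eq_zero_of_notMem_image_fst_tsupport {x : E} (hx : x ∉ Prod.fst '' tsupport G) (t : ℝ) :
    G (x, t) = 0 :=
  image_eq_zero_of_notMem_tsupport fun ht => hx ⟨(x, t), ht, rfl⟩

lemma eq_zero_of_notMem_image_snd_tsupport {t : ℝ} (ht : t ∉ Prod.snd '' tsupport G) (x : E) :
    G (x, t) = 0 :=
  image_eq_zero_of_notMem_tsupport fun hx => ht ⟨(x, t), hx, rfl⟩

variable [NormedSpace ℝ E] [NormedSpace ℝ F]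

namespace IsTestFunction

lemma prodMk_left (hG : IsTestFunction G) (x : E) : IsTestFunction (fun t => G (x, t)) :=
  ⟨hG.contDiff.comp (contDiff_prodMk_right x),
    HasCompactSupport.intro (hG.hasCompactSupport.image continuous_snd) fun _ ht =>
      eq_zero_of_notMem_image_snd_tsupport ht x⟩

lemma comp_neg_snd (hG : IsTestFunction G) : IsTestFunction (fun p : E × ℝ => G (p.1, -p.2)) :=
  hG.comp ((Homeomorph.refl E).prodCongr (Homeomorph.neg ℝ)) (contDiff_fst.prodMk contDiff_snd.neg)

end IsTestFunction

lemma fderiv_comp_neg_snd (hG : IsTestFunction G) (x e : E) (t : ℝ) :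
    fderiv ℝ (fun p : E × ℝ => G (p.1, -p.2)) (x, t) (e, 0) = fderiv ℝ G (x, -t) (e, 0) := by
  have h : HasFDerivAt (fun p : E × ℝ => G (p.1, -p.2)) _ (x, t) :=
    (hG.differentiable (x, -t)).hasFDerivAt.comp (x, t) (hasFDerivAt_fst.prodMk hasFDerivAt_snd.neg)
  simp [h.fderiv]

end Slices

section PartialFourier

/-- The Fourier transform of `G : E × ℝ → ℂ` in the second variable, at frequency `ξ`. -/
def partialFourier {E : Type*} (G : E × ℝ → ℂ) (ξ : ℝ) (x : E) : ℂ := 𝓕 (fun t => G (x, t)) ξ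

open scoped Convolution in
lemma partialFourier_eq_convolution {E : Type*} (G : E × ℝ → ℂ) (ξ : ℝ) :
    partialFourier G ξ = fun x => ((fun t : ℝ => (𝐞 (-(t * ξ)) : ℂ))
      ⋆[ContinuousLinearMap.mul ℝ ℂ, volume] fun t => G (x, -t)) 0 := by
  ext x
  simp [partialFourier, Real.fourier_real_eq, convolution_def, Circle.smul_def]

lemma partialFourier_mul_fst {E : Type*} (a : E → ℂ) (G : E × ℝ → ℂ) (ξ : ℝ) (x : E) :
    partialFourier (fun p => a p.1 * G p) ξ x = a x * partialFourier G ξ x := by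
  simp only [partialFourier, Real.fourier_real_eq, ← integral_const_mul, mul_smul_comm]

variable {E : Type*} [NormedAddCommGroup E] [NormedSpace ℝ E] {G : E × ℝ → ℂ}

lemma locallyIntegrable_fourierChar_neg_mul (ξ : ℝ) :
    LocallyIntegrable (fun t : ℝ => (𝐞 (-(t * ξ)) : ℂ)) :=
  Continuous.locallyIntegrable (by fun_prop)

lemma IsTestFunction.partialFourier (hG : IsTestFunction G) (ξ : ℝ) :
    IsTestFunction (partialFourier G ξ) := by
  constructor
  · have hconv := contDiffOn_convolution_right_with_param (n := ⊤) (μ := volume)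
      (f := fun t : ℝ => (𝐞 (-(t * ξ)) : ℂ)) (g := fun x t => G (x, -t))
      (ContinuousLinearMap.mul ℝ ℂ) isOpen_univ
      (hG.comp_neg_snd.hasCompactSupport.image continuous_snd)
      (fun x t _ ht => eq_zero_of_notMem_image_snd_tsupport ht x)
      (locallyIntegrable_fourierChar_neg_mul ξ) hG.comp_neg_snd.contDiff.contDiffOn
    rw [univ_prod_univ, contDiffOn_univ] at hconv
    rw [partialFourier_eq_convolution]
    exact hconv.comp (contDiff_prodMk_left 0)
  · refine HasCompactSupport.intro (hG.hasCompactSupport.image continuous_fst) fun x hx => ?_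
    simp [MagWedge.partialFourier, Real.fourier_real_eq, eq_zero_of_notMem_image_fst_tsupport hx]

lemma fderiv_partialFourier (hG : IsTestFunction G) (ξ : ℝ) (x e : E) :
    fderiv ℝ (partialFourier G ξ) x e = partialFourier (fun p => fderiv ℝ G p (e, 0)) ξ x := by
  have hG' := hG.comp_neg_snd
  have hconv := hasFDerivAt_convolution_right_with_param (μ := volume)
    (f := fun t : ℝ => (𝐞 (-(t * ξ)) : ℂ)) (g := fun x t => G (x, -t))
    (ContinuousLinearMap.mul ℝ ℂ) isOpen_univ (hG'.hasCompactSupport.image continuous_snd)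
    (fun x t _ ht => eq_zero_of_notMem_image_snd_tsupport ht x)
    (locallyIntegrable_fourierChar_neg_mul ξ) (hG'.contDiff.of_le (by simp)).contDiffOn
    (x, 0) trivial
  have hslice := hG'.fderiv.prodMk_left x
  rw [partialFourier_eq_convolution, partialFourier_eq_convolution]
  have hpartial := hconv.comp x (hasFDerivAt_prodMk_left (𝕜 := ℝ) x (0 : ℝ))
  refine (congrArg (· e) hpartial.fderiv).trans ?_
  refine (convolution_precompR_apply _ (locallyIntegrable_fourierChar_neg_mul ξ)
    hslice.hasCompactSupport hslice.continuous 0 _).trans ?_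
  simp only [← fderiv_comp_neg_snd hG]
  rfl

lemma partialFourier_add {H : E × ℝ → ℂ} (hG : IsTestFunction G) (hH : IsTestFunction H)
    (ξ : ℝ) (x : E) :
    partialFourier (fun p => G p + H p) ξ x = partialFourier G ξ x + partialFourier H ξ x :=
  congrFun (VectorFourier.fourierIntegral_add continuous_fourierChar continuous_inner
    (hG.prodMk_left x).integrable (hH.prodMk_left x).integrable) ξ

lemma partialFourier_fderiv_snd (hG : IsTestFunction G) (ξ : ℝ) (x : E) :
    partialFourier (fun p => fderiv ℝ G p (0, 1)) ξ x
      = 2 * π * I * ξ * partialFourier G ξ x := by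
  have hderiv : ∀ t, HasDerivAt (fun t => G (x, t)) (fderiv ℝ G (x, t) (0, 1)) t := fun t =>
    (hG.differentiable (x, t)).hasFDerivAt.comp_hasDerivAt t
      ((hasDerivAt_const t x).prodMk (hasDerivAt_id t))
  have hslice := hG.prodMk_left x
  have hfourier := Real.fourier_deriv hslice.integrable hslice.differentiable
    ((funext fun t => (hderiv t).deriv) ▸ ((hG.fderiv_apply (0, 1)).prodMk_left x).integrable)
  rw [funext fun t => (hderiv t).deriv] at hfourier
  simpa [partialFourier] using congrFun hfourier ξ

end PartialFourier

section Plancherel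

variable {E : Type*} [NormedAddCommGroup E] [NormedSpace ℝ E] {G : E × ℝ → ℂ}

lemma integral_norm_sq_partialFourier_slice (hG : IsTestFunction G) (x : E) :
    ∫ ξ, ‖partialFourier G ξ x‖ ^ 2 = ∫ t, ‖G (x, t)‖ ^ 2 :=
  let hslice := hG.prodMk_left x
  SchwartzMap.integral_norm_sq_fourier
    (hslice.hasCompactSupport.toSchwartzMap hslice.contDiff)

lemma integrable_norm_sq_partialFourier_slice (hG : IsTestFunction G) (x : E) :
    Integrable (fun ξ => ‖partialFourier G ξ x‖ ^ 2) :=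
  let hslice := hG.prodMk_left x
  (SchwartzMap.memLp (𝓕 (hslice.hasCompactSupport.toSchwartzMap hslice.contDiff)) 2
    volume).integrable_norm_pow two_ne_zero

variable [MeasurableSpace E] [BorelSpace E] [FiniteDimensional ℝ E] {μ : Measure E}
  [IsLocallyFiniteMeasure μ]

lemma stronglyMeasurable_uncurry_partialFourier (hG : Continuous G) :
    StronglyMeasurable (fun p : ℝ × E => partialFourier G p.1 p.2) := by
  simp only [partialFourier, Real.fourier_real_eq]
  refine StronglyMeasurable.integral_prod_right
    (f := fun (p : ℝ × E) t => 𝐞 (-(t * p.1)) • G (p.2, t)) (Continuous.stronglyMeasurable ?_)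
  unfold Function.uncurry
  fun_prop

lemma integrable_norm_sq_partialFourier (hG : IsTestFunction G) :
    Integrable (fun p : ℝ × E => ‖partialFourier G p.1 p.2‖ ^ 2) (volume.prod μ) := by
  have hmeas := (stronglyMeasurable_uncurry_partialFourier hG.continuous).norm.pow 2
  refine (integrable_prod_iff' hmeas.aestronglyMeasurable).2
    ⟨ae_of_all _ (integrable_norm_sq_partialFourier_slice hG), ?_⟩
  simpa only [Pi.pow_apply, norm_pow, norm_norm, integral_norm_sq_partialFourier_slice hG] using
    (hG.integrable_norm_sq (μ := μ.prod volume)).integral_prod_left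

lemma integral_norm_sq_partialFourier (hG : IsTestFunction G) :
    ∫ p, ‖partialFourier G p.1 p.2‖ ^ 2 ∂(volume.prod μ) = ∫ p, ‖G p‖ ^ 2 ∂(μ.prod volume) := by
  rw [integral_prod_symm _ (integrable_norm_sq_partialFourier hG),
    integral_prod _ hG.integrable_norm_sq]
  simp only [integral_norm_sq_partialFourier_slice hG]

end Plancherel

instance neZero_prod {X Y : Type*} [MeasurableSpace X] [MeasurableSpace Y] {μ : Measure X}
    {ν : Measure Y} [SFinite ν] [NeZero μ] [NeZero ν] : NeZero (μ.prod ν) := by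
  refine ⟨fun h => ?_⟩
  rw [← Measure.measure_univ_eq_zero, ← univ_prod_univ, Measure.prod_prod, mul_eq_zero,
    Measure.measure_univ_eq_zero, Measure.measure_univ_eq_zero] at h
  exact h.elim (NeZero.ne μ) (NeZero.ne ν)

section Fibration

variable {E ι : Type*} [NormedAddCommGroup E] [NormedSpace ℝ E] [Fintype ι]
  {A : E → E →L[ℝ] ℝ} {V : E → ℝ} {e : ι → E}

/-- The magnetic potential `A + V dz` on `E × ℝ`, invariant along the axis `z`. A partial Fourier
transform along the axis turns its component `V` into the electric potentials `(V - τ)²` on `E`. -/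
def prodPotential (A : E → E →L[ℝ] ℝ) (V : E → ℝ) (p : E × ℝ) : E × ℝ →L[ℝ] ℝ :=
  (A p.1).coprod (V p.1 • ContinuousLinearMap.id ℝ ℝ)

/-- The frame `e` of `E`, completed by the unit vector of the axis of `E × ℝ`. -/
def prodFrame (e : ι → E) : Option ι → E × ℝ
  | none => (0, 1)
  | some i => (e i, 0)

lemma covDeriv_prodPotential_fst (W : E × ℝ → ℂ) (p : E × ℝ) (d : E) :
    covDeriv (prodPotential A V) W p (d, 0) = -I * fderiv ℝ W p (d, 0) + A p.1 d * W p := by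
  simp [covDeriv_apply, prodPotential]

lemma covDeriv_prodPotential_snd (W : E × ℝ → ℂ) (p : E × ℝ) :
    covDeriv (prodPotential A V) W p (0, 1) = -I * fderiv ℝ W p (0, 1) + V p.1 * W p := by
  simp [covDeriv_apply, prodPotential]

lemma contDiff_prodPotential {n : WithTop ℕ∞} (hA : ContDiff ℝ n A) (hV : ContDiff ℝ n V) :
    ContDiff ℝ n (prodPotential A V) := by
  have hcoprod : prodPotential A V = fun p =>
      (A p.1).comp (ContinuousLinearMap.fst ℝ E ℝ) + V p.1 • ContinuousLinearMap.snd ℝ E ℝ := by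
    ext p d <;> simp [prodPotential]
  rw [hcoprod]
  exact ((hA.comp contDiff_fst).clm_comp contDiff_const).add
    ((hV.comp contDiff_fst).smul contDiff_const)

lemma isTestFunction_covDeriv_apply {A : E → E →L[ℝ] ℝ} (hA : ContDiff ℝ ∞ A) {u : E → ℂ}
    (hu : IsTestFunction u) (d : E) : IsTestFunction (fun x => covDeriv A u x d) := by
  simp only [covDeriv_apply]
  exact ((hu.fderiv_apply d).mul contDiff_const).add
    (hu.ofReal_mul (hA.clm_apply contDiff_const))

lemma covDeriv_partialFourier {W : E × ℝ → ℂ} (hA : ContDiff ℝ ∞ A) (hW : IsTestFunction W)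
    (ξ : ℝ) (x d : E) :
    covDeriv A (partialFourier W ξ) x d
      = partialFourier (fun p => covDeriv (prodPotential A V) W p (d, 0)) ξ x := by
  have hAW : IsTestFunction (fun p : E × ℝ => (A p.1 d : ℂ) * W p) :=
    hW.ofReal_mul ((hA.comp contDiff_fst).clm_apply contDiff_const)
  simp only [covDeriv_prodPotential_fst]
  rw [partialFourier_add ((hW.fderiv_apply _).mul contDiff_const) hAW,
    partialFourier_mul_fst (fun _ => -I), partialFourier_mul_fst (fun x => (A x d : ℂ)),
    covDeriv_apply, fderiv_partialFourier hW]

lemma partialFourier_covDeriv_snd {W : E × ℝ → ℂ} (hV : ContDiff ℝ ∞ V) (hW : IsTestFunction W)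
    (ξ : ℝ) (x : E) :
    partialFourier (fun p => covDeriv (prodPotential A V) W p (0, 1)) ξ x
      = (V x + 2 * π * ξ : ℝ) * partialFourier W ξ x := by
  have hVW : IsTestFunction (fun p : E × ℝ => (V p.1 : ℂ) * W p) :=
    hW.ofReal_mul (hV.comp contDiff_fst)
  simp only [covDeriv_prodPotential_snd]
  rw [partialFourier_add ((hW.fderiv_apply _).mul contDiff_const) hVW,
    partialFourier_mul_fst (fun _ => -I), partialFourier_mul_fst (fun x => (V x : ℂ)),
    partialFourier_fderiv_snd hW]
  push_cast
  linear_combination -(2 * π * ξ * partialFourier W ξ x) * Complex.I_mul_I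

lemma energyDensity_partialFourier {W : E × ℝ → ℂ} (hA : ContDiff ℝ ∞ A) (hV : ContDiff ℝ ∞ V)
    (hW : IsTestFunction W) (ξ : ℝ) (x : E) :
    energyDensity A (fun y => V y + 2 * π * ξ) e (partialFourier W ξ) x
      = ∑ j, ‖partialFourier
          (fun p => covDeriv (prodPotential A V) W p (prodFrame e j)) ξ x‖ ^ 2 := by
  simp only [energyDensity, Fintype.sum_option, prodFrame, covDeriv_partialFourier hA hW (V := V),
    partialFourier_covDeriv_snd hV hW, norm_mul, mul_pow,
    Complex.norm_real, Real.norm_eq_abs, sq_abs]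
  ring

variable [MeasurableSpace E] [BorelSpace E] [FiniteDimensional ℝ E] {μ : Measure E}
  [IsLocallyFiniteMeasure μ]

lemma integrable_energyDensity_partialFourier {W : E × ℝ → ℂ} (hA : ContDiff ℝ ∞ A)
    (hV : ContDiff ℝ ∞ V) (hW : IsTestFunction W) :
    Integrable (fun q : ℝ × E => energyDensity A (fun y => V y + 2 * π * q.1) e
      (partialFourier W q.1) q.2) (volume.prod μ) := by
  simp only [energyDensity_partialFourier hA hV hW]
  exact integrable_finsetSum _ fun j _ => integrable_norm_sq_partialFourier
    (isTestFunction_covDeriv_apply (contDiff_prodPotential hA hV) hW _)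

lemma integral_energyDensity_partialFourier {W : E × ℝ → ℂ} (hA : ContDiff ℝ ∞ A)
    (hV : ContDiff ℝ ∞ V) (hW : IsTestFunction W) :
    ∫ ξ, ∫ x, energyDensity A (fun y => V y + 2 * π * ξ) e (partialFourier W ξ) x ∂μ
      = ∫ p, energyDensity (prodPotential A V) 0 (prodFrame e) W p ∂(μ.prod volume) := by
  have htest := isTestFunction_covDeriv_apply (contDiff_prodPotential hA hV) hW
  rw [integral_integral (integrable_energyDensity_partialFourier hA hV hW)]
  simp only [energyDensity_partialFourier hA hV hW]
  rw [integral_finsetSum _ fun j _ => integrable_norm_sq_partialFourier (htest _)]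
  simp only [integral_norm_sq_partialFourier (htest _), energyDensity, Pi.zero_apply, ne_eq,
    OfNat.ofNat_ne_zero, not_false_eq_true, zero_pow, zero_mul, add_zero]
  rw [integral_finsetSum _ fun j _ => (htest _).integrable_norm_sq]

lemma le_rayleighInf_prod [NeZero μ] (hA : ContDiff ℝ ∞ A) (hV : ContDiff ℝ ∞ V) {K : ℝ}
    (hK : ∀ τ, K ≤ rayleighInf μ (energyDensity A (fun x => V x - τ) e)) :
    K ≤ rayleighInf (μ.prod volume) (energyDensity (prodPotential A V) 0 (prodFrame e)) := by
  refine (le_rayleighInf_iff fun _ _ => energyDensity_nonneg _ _).2 fun W hW => ?_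
  have hfibre : ∀ ξ, K * ∫ x, ‖partialFourier W ξ x‖ ^ 2 ∂μ
      ≤ ∫ x, energyDensity A (fun y => V y + 2 * π * ξ) e (partialFourier W ξ) x ∂μ := fun ξ => by
    simpa only [sub_neg_eq_add] using (le_rayleighInf_iff fun _ _ => energyDensity_nonneg _ _).1
      (hK (-(2 * π * ξ))) _ (hW.partialFourier ξ)
  calc K * ∫ p, ‖W p‖ ^ 2 ∂(μ.prod volume)
      = ∫ ξ, K * ∫ x, ‖partialFourier W ξ x‖ ^ 2 ∂μ := by
        rw [← integral_norm_sq_partialFourier hW, integral_const_mul,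
          integral_prod _ (integrable_norm_sq_partialFourier hW)]
    _ ≤ ∫ ξ, ∫ x, energyDensity A (fun y => V y + 2 * π * ξ) e (partialFourier W ξ) x ∂μ :=
        integral_mono ((integrable_norm_sq_partialFourier hW).integral_prod_left.const_mul K)
          (integrable_energyDensity_partialFourier hA hV hW).integral_prod_left hfibre
    _ = _ := integral_energyDensity_partialFourier hA hV hW

end Fibration

section FibreBound

/-- The bottom of the spectrum of `-d²/dz²` on the line is `0`: dilate a bump. -/
lemma exists_isTestFunction_integral_deriv_sq_le {ε : ℝ} (hε : 0 < ε) :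
    ∃ η : ℝ → ℝ, IsTestFunction η ∧ 0 < ∫ z, ‖η z‖ ^ 2 ∧
      ∫ z, ‖deriv η z‖ ^ 2 ≤ ε * ∫ z, ‖η z‖ ^ 2 := by
  obtain ⟨χ, hχ, hpos⟩ := exists_isTestFunction_norm_pos (μ := (volume : Measure ℝ)) ℝ
  set C := ∫ z, ‖χ z‖ ^ 2
  set D := ∫ z, ‖deriv χ z‖ ^ 2
  have hD : 0 < D + 1 := add_pos_of_nonneg_of_pos (integral_nonneg fun _ => by positivity) one_pos
  obtain ⟨l, hl, hlD⟩ : ∃ l : ℝ, 0 < l ∧ l ^ 2 * D ≤ ε * C := by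
    refine ⟨√(ε * C / (D + 1)), by positivity, ?_⟩
    rw [Real.sq_sqrt (by positivity), div_mul_eq_mul_div, div_le_iff₀ hD]
    nlinarith [mul_pos hε hpos]
  have hnorm : ∫ z, ‖χ (l * z)‖ ^ 2 = l⁻¹ * C := by
    rw [Measure.integral_comp_mul_left (fun z => ‖χ z‖ ^ 2), abs_of_pos (by positivity),
      smul_eq_mul]
  have hderiv : ∫ z, ‖deriv (fun z => χ (l * z)) z‖ ^ 2 = l⁻¹ * (l ^ 2 * D) := by
    simp only [deriv_comp_mul_left l χ, smul_eq_mul, norm_mul, mul_pow, integral_const_mul,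
      Real.norm_of_nonneg hl.le]
    rw [Measure.integral_comp_mul_left (fun z => ‖deriv χ z‖ ^ 2), abs_of_pos (by positivity),
      smul_eq_mul]
    ring
  refine ⟨fun z => χ (l * z), hχ.comp (Homeomorph.mulLeft₀ l hl.ne') ?_, ?_, ?_⟩
  · exact contDiff_const.mul contDiff_id
  · rw [hnorm]
    positivity
  · rw [hnorm, hderiv, mul_left_comm ε]
    gcongr

variable {E ι : Type*} [NormedAddCommGroup E] [NormedSpace ℝ E] [Fintype ι]
  {A : E → E →L[ℝ] ℝ} {V : E → ℝ} {e : ι → E} {η : ℝ → ℝ} {v : E → ℂ}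

lemma IsTestFunction.prod_mul (hη : IsTestFunction η) (hv : IsTestFunction v) :
    IsTestFunction (fun p : E × ℝ => (η p.2 : ℂ) * v p.1) := by
  refine ⟨(Complex.ofRealCLM.contDiff.comp (hη.contDiff.comp contDiff_snd)).mul
    (hv.contDiff.comp contDiff_fst), HasCompactSupport.intro
      (hv.hasCompactSupport.prod hη.hasCompactSupport) fun p hp => ?_⟩
  rw [mem_prod, not_and_or] at hp
  rcases hp with hp | hp <;> simp [image_eq_zero_of_notMem_tsupport hp]

lemma energyDensity_prodPotential_mul (hη : Differentiable ℝ η) (hv : Differentiable ℝ v)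
    (p : E × ℝ) :
    energyDensity (prodPotential A V) 0 (prodFrame e) (fun q => (η q.2 : ℂ) * v q.1) p
      = energyDensity A V e v p.1 * ‖η p.2‖ ^ 2 + ‖v p.1‖ ^ 2 * ‖deriv η p.2‖ ^ 2 := by
  have hgη : HasFDerivAt (fun q : E × ℝ => η q.2) _ p :=
    (hη p.2).hasFDerivAt.comp p hasFDerivAt_snd
  have hgv : HasFDerivAt (fun q : E × ℝ => v q.1) _ p :=
    (hv p.1).hasFDerivAt.comp p hasFDerivAt_fst
  have hcov := covDeriv_mul (A := prodPotential A V) hgη.differentiableAt hgv.differentiableAt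
  have hhorizontal : ∀ i, covDeriv (prodPotential A V) (fun q => (η q.2 : ℂ) * v q.1) p (e i, 0)
      = η p.2 * covDeriv A v p.1 (e i) := fun i => by
    rw [hcov, covDeriv_prodPotential_fst, hgη.fderiv, hgv.fderiv]
    simp [covDeriv_apply]
  have hvertical : covDeriv (prodPotential A V) (fun q => (η q.2 : ℂ) * v q.1) p (0, 1)
      = (⟨η p.2 * V p.1, -deriv η p.2⟩ : ℂ) * v p.1 := by
    rw [hcov, covDeriv_prodPotential_snd, hgη.fderiv, hgv.fderiv]
    simp [Complex.mk_eq_add_mul_I]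
    ring
  have hmk : ‖(⟨η p.2 * V p.1, -deriv η p.2⟩ : ℂ)‖ ^ 2 = (η p.2 * V p.1) ^ 2 + deriv η p.2 ^ 2 := by
    rw [Complex.sq_norm, Complex.normSq_mk]
    ring
  simp only [energyDensity, Fintype.sum_option, prodFrame, hhorizontal, hvertical, norm_mul,
    mul_pow, hmk, Complex.norm_real, Real.norm_eq_abs, sq_abs, Pi.zero_apply, ← Finset.mul_sum]
  ring

variable [MeasurableSpace E] {μ : Measure E}

lemma rayleighInf_prodPotential_sub (A : E → E →L[ℝ] ℝ) (V : E → ℝ) (e : ι → E) (τ : ℝ) :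
    rayleighInf (μ.prod volume)
        (energyDensity (prodPotential A fun x => V x - τ) 0 (prodFrame e))
      = rayleighInf (μ.prod volume) (energyDensity (prodPotential A V) 0 (prodFrame e)) := by
  rw [← rayleighInf_gauge (prodPotential A V) (φ := fun q : E × ℝ => -τ * q.2)
    (contDiff_const.mul contDiff_snd)]
  congr! 2
  funext p
  have h : HasFDerivAt (fun q : E × ℝ => -τ * q.2) _ p :=
    (hasFDerivAt_snd (𝕜 := ℝ) (E := E) (F := ℝ)).const_mul (-τ)
  rw [h.fderiv]
  ext <;> simp [prodPotential, sub_eq_add_neg]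

variable [BorelSpace E] [FiniteDimensional ℝ E] [IsLocallyFiniteMeasure μ]

lemma integral_energyDensity_prodPotential_mul (hA : Continuous A) (hV : Continuous V)
    (hη : IsTestFunction η) (hv : IsTestFunction v) :
    ∫ p, energyDensity (prodPotential A V) 0 (prodFrame e) (fun q => (η q.2 : ℂ) * v q.1) p
        ∂(μ.prod volume)
      = (∫ x, energyDensity A V e v x ∂μ) * (∫ z, ‖η z‖ ^ 2)
        + (∫ x, ‖v x‖ ^ 2 ∂μ) * ∫ z, ‖deriv η z‖ ^ 2 := by
  have hderiv : Integrable (fun z => ‖deriv η z‖ ^ 2) := by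
    simpa only [fderiv_apply_one_eq_deriv] using (hη.fderiv_apply 1).integrable_norm_sq
  simp only [energyDensity_prodPotential_mul hη.differentiable hv.differentiable]
  rw [integral_add ((integrable_energyDensity hA hV hv).mul_prod hη.integrable_norm_sq)
    (hv.integrable_norm_sq.mul_prod hderiv),
    integral_prod_mul (fun x => energyDensity A V e v x) (fun z => ‖η z‖ ^ 2),
    integral_prod_mul (fun x => ‖v x‖ ^ 2) (fun z => ‖deriv η z‖ ^ 2)]

lemma rayleighInf_prod_le [NeZero μ] (hA : Continuous A) (hV : Continuous V) :
    rayleighInf (μ.prod volume) (energyDensity (prodPotential A V) 0 (prodFrame e))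
      ≤ rayleighInf μ (energyDensity A V e) := by
  refine (le_rayleighInf_iff fun _ _ => energyDensity_nonneg _ _).2 fun v hv => ?_
  have hN : 0 ≤ ∫ x, ‖v x‖ ^ 2 ∂μ := integral_nonneg fun _ => by positivity
  refine le_of_forall_pos_le_add fun δ hδ => ?_
  obtain ⟨η, hη, hpos, hle⟩ := exists_isTestFunction_integral_deriv_sq_le
    (ε := δ / (∫ x, ‖v x‖ ^ 2 ∂μ + 1)) (by positivity)
  have hprod := rayleighInf_mul_le (μ := μ.prod volume) (ρ := energyDensity (prodPotential A V) 0
    (prodFrame e)) (fun _ _ => energyDensity_nonneg _ _) (hη.prod_mul hv)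
  simp only [integral_energyDensity_prodPotential_mul hA hV hη hv, norm_mul, mul_pow,
    Complex.norm_real, mul_comm (‖η _‖ ^ 2)] at hprod
  rw [integral_prod_mul (fun x => ‖v x‖ ^ 2) (fun z => ‖η z‖ ^ 2), ← mul_assoc] at hprod
  set N := ∫ x, ‖v x‖ ^ 2 ∂μ
  refine le_of_mul_le_mul_right (hprod.trans ?_) hpos
  calc _ ≤ (∫ x, energyDensity A V e v x ∂μ) * (∫ z, ‖η z‖ ^ 2)
        + N * (δ / (N + 1) * ∫ z, ‖η z‖ ^ 2) := by gcongr
    _ = (∫ x, energyDensity A V e v x ∂μ + δ * (N / (N + 1))) * ∫ z, ‖η z‖ ^ 2 := by ring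
    _ ≤ _ := by
      gcongr
      exact mul_le_of_le_one_right hδ.le ((div_le_one (by positivity)).2 (by linarith))

lemma le_rayleighInf_prod_iff [NeZero μ] (hA : ContDiff ℝ ∞ A) (hV : ContDiff ℝ ∞ V) {K : ℝ} :
    K ≤ rayleighInf (μ.prod volume) (energyDensity (prodPotential A V) 0 (prodFrame e)) ↔
      ∀ τ, K ≤ rayleighInf μ (energyDensity A (fun x => V x - τ) e) := by
  refine ⟨fun hK τ => hK.trans ?_, le_rayleighInf_prod hA hV⟩
  rw [← rayleighInf_prodPotential_sub A V e τ]
  exact rayleighInf_prod_le hA.continuous (hV.continuous.sub continuous_const)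

end FibreBound

section MagneticTranslation

variable {E ι : Type*} [NormedAddCommGroup E] [NormedSpace ℝ E] [Fintype ι]
  {A : E →L[ℝ] E →L[ℝ] ℝ} {V : E →L[ℝ] ℝ} {e : ι → E} {u : E → ℂ} {w : E} {τ : ℝ}

/-- The magnetic translation by `w` for a linear potential `A`: the translate of `u`, followed by
the gauge transform that compensates the increment `A w` of the potential. -/
def magneticTranslate (A : E →L[ℝ] E →L[ℝ] ℝ) (w : E) (u : E → ℂ) : E → ℂ :=
  gauge (A w) fun x => u (x - w)

lemma IsTestFunction.magneticTranslate (hu : IsTestFunction u) :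
    IsTestFunction (magneticTranslate A w u) :=
  (hu.comp (Homeomorph.subRight w) (contDiff_id.sub contDiff_const)).gauge (A w).contDiff

lemma norm_magneticTranslate (x : E) : ‖magneticTranslate A w u x‖ = ‖u (x - w)‖ :=
  norm_gauge _ _ x

lemma energyDensity_magneticTranslate (hu : Differentiable ℝ u) (x : E) :
    energyDensity A (fun y => V y - (τ + V w)) e (magneticTranslate A w u) x
      = energyDensity A (fun y => V y - τ) e u (x - w) := by
  have hshift : ∀ y : E, HasFDerivAt (fun x => x - w) (ContinuousLinearMap.id ℝ E) y :=
    fun y => (hasFDerivAt_id y).sub_const w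
  have hcov : ∀ y, covDeriv (fun x => A x - A w) (fun x => u (x - w)) y
      = covDeriv A u (y - w) := fun y => by
    simpa only [(hshift _).fderiv, ContinuousLinearMap.comp_id, Function.comp_def, map_sub]
      using covDeriv_comp (A := A) (hshift y).differentiableAt (hu (y - w))
  have hgauge := energyDensity_gauge (A := fun x => A x - A w) (V := fun y => V y - (τ + V w))
    (e := e) (u := fun x => u (x - w)) (A w).differentiable
    (hu.comp (differentiable_id.sub_const w))
  simp only [ContinuousLinearMap.fderiv, sub_add_cancel] at hgauge
  refine (congrFun hgauge x).trans ?_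
  simp only [energyDensity, hcov, map_sub, sub_sub, add_comm (V w)]

lemma IsTestFunction.eventually_forall_tsupport_pos (hu : IsTestFunction u) (hVw : 0 < V w) :
    ∀ᶠ a : ℝ in atTop, ∀ y ∈ tsupport u, 0 < V y + V (a • w) := by
  obtain ⟨C, hC⟩ := hu.hasCompactSupport.exists_bound_of_continuousOn V.continuous.continuousOn
  filter_upwards [eventually_gt_atTop (C / V w)] with a ha y hy
  rw [div_lt_iff₀ hVw] at ha
  have := (abs_le.1 (hC y hy)).1
  rw [map_smul, smul_eq_mul]
  linarith

variable [MeasurableSpace E] [BorelSpace E] {ν : Measure E}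

lemma setIntegral_pos_eq_integral_of_translate (hν : MeasurePreserving (· - w) ν ν)
    (hw : ∀ y ∈ tsupport u, 0 < V y + V w) {g : E → ℝ} {G : E → ℝ}
    (hG : ∀ x, G x = g (x - w)) (hg : ∀ y ∉ tsupport u, g y = 0) :
    ∫ x in {x | 0 < V x}, G x ∂ν = ∫ x, g x ∂ν := by
  rw [setIntegral_eq_integral_of_forall_compl_eq_zero]
  · simp only [hG]
    exact hν.integral_comp (Homeomorph.subRight w).measurableEmbedding g
  · intro x hx
    rw [hG]
    refine hg _ fun hmem => hx ?_
    simpa using hw _ hmem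

lemma rayleighInf_restrict_mul_le (hν : MeasurePreserving (· - w) ν ν) (hu : IsTestFunction u)
    (hw : ∀ y ∈ tsupport u, 0 < V y + V w) :
    rayleighInf (ν.restrict {x | 0 < V x}) (energyDensity A (fun x => V x - (τ + V w)) e)
        * ∫ x, ‖u x‖ ^ 2 ∂ν
      ≤ ∫ x, energyDensity A (fun x => V x - τ) e u x ∂ν := by
  rw [← setIntegral_pos_eq_integral_of_translate hν hw
      (energyDensity_magneticTranslate hu.differentiable)
      fun y hy => energyDensity_eq_zero_of_notMem_tsupport hy,
    ← setIntegral_pos_eq_integral_of_translate hν hw (G := fun x => ‖magneticTranslate A w u x‖ ^ 2)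
      (fun x => by rw [norm_magneticTranslate])
      fun y hy => by simp [image_eq_zero_of_notMem_tsupport hy]]
  exact rayleighInf_mul_le (fun _ _ => energyDensity_nonneg _ _) hu.magneticTranslate

variable [FiniteDimensional ℝ E] [IsLocallyFiniteMeasure ν]

lemma neZero_restrict_pos [NeZero ν] (hν : ∀ a : ℝ, MeasurePreserving (· - a • w) ν ν)
    (hVw : 0 < V w) : NeZero (ν.restrict {x | 0 < V x}) := by
  obtain ⟨u, hu, hpos⟩ := exists_isTestFunction_norm_pos (μ := ν) ℂ
  obtain ⟨a, ha⟩ := (hu.eventually_forall_tsupport_pos hVw).exists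
  refine ⟨fun hzero => hpos.ne' ?_⟩
  rw [← setIntegral_pos_eq_integral_of_translate (hν a) ha (G := fun x => ‖u (x - a • w)‖ ^ 2)
    (fun _ => rfl) fun y hy => by simp [image_eq_zero_of_notMem_tsupport hy], hzero,
    integral_zero_measure]

lemma eventually_rayleighInf_restrict_lt [NeZero ν]
    (hν : ∀ a : ℝ, MeasurePreserving (· - a • w) ν ν) (hVw : 0 < V w) {K : ℝ}
    (hK : rayleighInf (ν.prod volume) (energyDensity (prodPotential A V) 0 (prodFrame e)) < K) :
    ∀ᶠ τ in atTop,
      rayleighInf (ν.restrict {x | 0 < V x}) (energyDensity A (fun x => V x - τ) e) < K := by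
  obtain ⟨τ₀, u, hu, hlt⟩ : ∃ τ₀ u, IsTestFunction u ∧
      ∫ x, energyDensity A (fun x => V x - τ₀) e u x ∂ν < K * ∫ x, ‖u x‖ ^ 2 ∂ν := by
    by_contra! hle
    refine hK.not_ge ((le_rayleighInf_prod_iff A.contDiff V.contDiff).2 fun τ => ?_)
    exact (le_rayleighInf_iff fun _ _ => energyDensity_nonneg _ _).2 (hle τ)
  have hshift : Tendsto (fun τ => (τ - τ₀) / V w) atTop atTop :=
    (tendsto_atTop_add_const_right _ _ tendsto_id).atTop_div_const hVw
  filter_upwards [hshift.eventually (hu.eventually_forall_tsupport_pos hVw)] with τ hτ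
  have hle := (rayleighInf_restrict_mul_le (A := A) (e := e) (τ := τ₀) (hν _) hu hτ).trans_lt hlt
  have hVshift : τ₀ + V (((τ - τ₀) / V w) • w) = τ := by
    rw [map_smul, smul_eq_mul, div_mul_cancel₀ _ hVw.ne', add_sub_cancel]
  rw [hVshift] at hle
  exact lt_of_mul_lt_mul_right hle (integral_nonneg fun _ => by positivity)

end MagneticTranslation

section Localisation

lemma exists_abs_deriv_smoothTransition_le : ∃ M, ∀ s, |deriv Real.smoothTransition s| ≤ M := by
  have hsupp : HasCompactSupport (deriv Real.smoothTransition) := by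
    refine HasCompactSupport.of_support_subset_isCompact (isCompact_Icc (a := 0) (b := 1))
      fun s hs => ?_
    by_contra hs'
    rw [mem_Icc, not_and_or, not_le, not_le] at hs'
    refine hs ?_
    rcases hs' with h | h
    · have : Real.smoothTransition =ᶠ[𝓝 s] fun _ => 0 := by
        filter_upwards [Iio_mem_nhds h] with t ht using Real.smoothTransition.zero_of_nonpos ht.le
      simp [this.deriv_eq]
    · have : Real.smoothTransition =ᶠ[𝓝 s] fun _ => 1 := by
        filter_upwards [Ioi_mem_nhds h] with t ht using Real.smoothTransition.one_of_one_le ht.le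
      simp [this.deriv_eq]
  exact (Real.smoothTransition.contDiff.continuous_deriv le_rfl).bounded_above_of_compact_support
    hsupp

variable {E ι : Type*} [NormedAddCommGroup E] [NormedSpace ℝ E] [Fintype ι]
  {A : E → E →L[ℝ] ℝ} {V : E →L[ℝ] ℝ} {e : ι → E} {u : E → ℂ} {τ : ℝ}

/-- The angle of the localisation at scale `τ`: its cosine is supported in `{V ≤ τ / 2}` and its
sine in `{τ / 4 ≤ V}`. -/
def cutoffAngle (V : E →L[ℝ] ℝ) (τ : ℝ) (x : E) : ℝ :=
  π / 2 * Real.smoothTransition (4 * (V x / τ) - 1)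

lemma contDiff_cutoffAngle (V : E →L[ℝ] ℝ) (τ : ℝ) : ContDiff ℝ ∞ (cutoffAngle V τ) :=
  contDiff_const.mul (Real.smoothTransition.contDiff.comp
    ((contDiff_const.mul (V.contDiff.div_const τ)).sub contDiff_const))

lemma cutoffAngle_of_le (hτ : 0 < τ) {x : E} (hx : V x ≤ τ / 4) : cutoffAngle V τ x = 0 := by
  have : V x / τ ≤ 1 / 4 := (div_le_iff₀ hτ).2 (by linarith)
  rw [cutoffAngle, Real.smoothTransition.zero_of_nonpos (by linarith), mul_zero]

lemma cutoffAngle_of_ge (hτ : 0 < τ) {x : E} (hx : τ / 2 ≤ V x) : cutoffAngle V τ x = π / 2 := by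
  have : 1 / 2 ≤ V x / τ := (le_div_iff₀ hτ).2 (by linarith)
  rw [cutoffAngle, Real.smoothTransition.one_of_one_le (by linarith), mul_one]

lemma fderiv_cutoffAngle (V : E →L[ℝ] ℝ) (τ : ℝ) (x d : E) :
    fderiv ℝ (cutoffAngle V τ) x d
      = 2 * π * deriv Real.smoothTransition (4 * (V x / τ) - 1) * V d / τ := by
  have hst : DifferentiableAt ℝ Real.smoothTransition (4 * (V x / τ) - 1) :=
    (Real.smoothTransition.contDiff (n := 1)).differentiable one_ne_zero _
  have h : HasFDerivAt (cutoffAngle V τ) _ x := ((hst.hasDerivAt.comp_hasFDerivAt x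
    (((V.hasFDerivAt.mul_const τ⁻¹).const_mul 4).sub_const 1)).const_mul (π / 2))
  rw [h.fderiv]
  simp
  ring

lemma exists_sum_fderiv_cutoffAngle_sq_le (V : E →L[ℝ] ℝ) (e : ι → E) :
    ∃ C, ∀ τ x, ∑ i, fderiv ℝ (cutoffAngle V τ) x (e i) ^ 2 ≤ C / τ ^ 2 := by
  obtain ⟨M, hM⟩ := exists_abs_deriv_smoothTransition_le
  refine ⟨∑ i, (2 * π * M * V (e i)) ^ 2, fun τ x => ?_⟩
  simp only [fderiv_cutoffAngle, div_pow, ← Finset.sum_div, mul_pow]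
  refine div_le_div_of_nonneg_right (Finset.sum_le_sum fun i _ => ?_) (sq_nonneg τ)
  gcongr _ * ?_ * _
  exact sq_le_sq.2 ((hM _).trans (le_abs_self M))

lemma mul_norm_sq_le_energyDensity_cos (hτ : 0 < τ) (x : E) :
    τ ^ 2 / 4 * ‖(Real.cos (cutoffAngle V τ x) : ℂ) * u x‖ ^ 2
      ≤ energyDensity A (fun x => V x - τ) e
          (fun y => (Real.cos (cutoffAngle V τ y) : ℂ) * u y) x := by
  have hV : τ ^ 2 / 4 * ‖(Real.cos (cutoffAngle V τ x) : ℂ) * u x‖ ^ 2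
      ≤ (V x - τ) ^ 2 * ‖(Real.cos (cutoffAngle V τ x) : ℂ) * u x‖ ^ 2 := by
    rcases le_total (V x) (τ / 2) with hx | hx
    · gcongr
      nlinarith
    · simp [cutoffAngle_of_ge hτ hx]
  exact hV.trans (le_add_of_nonneg_left (Finset.sum_nonneg fun _ _ => by positivity))

lemma tsupport_sin_cutoffAngle_subset (V : E →L[ℝ] ℝ) (u : E → ℂ) (hτ : 0 < τ) :
    tsupport (fun x => (Real.sin (cutoffAngle V τ x) : ℂ) * u x) ⊆ {x | 0 < V x} := by
  refine (closure_minimal (t := {x | τ / 4 ≤ V x}) (fun x hx => ?_)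
    (isClosed_le continuous_const V.continuous)).trans fun x hx => ?_
  · by_contra hlt
    exact hx (by simp [cutoffAngle_of_le hτ (not_le.1 hlt).le])
  · exact (by positivity : 0 < τ / 4).trans_le hx

variable [MeasurableSpace E] {ν : Measure E}

lemma rayleighInf_mul_le_of_tsupport_subset {Ω : Set E} {ρ : (E → ℂ) → E → ℝ}
    (hρ : ∀ u x, 0 ≤ ρ u x) (hsupp : ∀ u, ∀ x ∉ tsupport u, ρ u x = 0)
    (hu : IsTestFunction u) (hΩ : tsupport u ⊆ Ω) :
    rayleighInf ν ρ * ∫ x in Ω, ‖u x‖ ^ 2 ∂ν ≤ ∫ x in Ω, ρ u x ∂ν := by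
  rw [setIntegral_eq_integral_of_forall_compl_eq_zero fun x hx => hsupp u x fun h => hx (hΩ h),
    setIntegral_eq_integral_of_forall_compl_eq_zero fun x hx => by
      simp [image_eq_zero_of_notMem_tsupport fun h => hx (hΩ h)]]
  exact rayleighInf_mul_le hρ hu

lemma le_rayleighInf_restrict [BorelSpace E] [FiniteDimensional ℝ E] [IsLocallyFiniteMeasure ν]
    (hA : Continuous A) {C K : ℝ} (hτ : 0 < τ) [NeZero (ν.restrict {x | 0 < V x})]
    (hC : ∀ x, ∑ i, fderiv ℝ (cutoffAngle V τ) x (e i) ^ 2 ≤ C)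
    (hK : K ≤ rayleighInf ν (energyDensity A (fun x => V x - τ) e)) (hKτ : K ≤ τ ^ 2 / 4) :
    K - C ≤ rayleighInf (ν.restrict {x | 0 < V x}) (energyDensity A (fun x => V x - τ) e) := by
  refine (le_rayleighInf_iff fun _ _ => energyDensity_nonneg _ _).2 fun u hu => ?_
  have hf := contDiff_cutoffAngle V τ
  have hV : Continuous fun x => V x - τ := V.continuous.sub continuous_const
  have hcos : K * ∫ x in {x | 0 < V x}, ‖(Real.cos (cutoffAngle V τ x) : ℂ) * u x‖ ^ 2 ∂ν
      ≤ ∫ x in {x | 0 < V x}, energyDensity A (fun x => V x - τ) e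
          (fun y => (Real.cos (cutoffAngle V τ y) : ℂ) * u y) x ∂ν := by
    rw [← integral_const_mul]
    refine integral_mono ((hu.ofReal_mul hf.cos).integrable_norm_sq.const_mul K)
      (integrable_energyDensity hA hV (hu.ofReal_mul hf.cos)) fun x => ?_
    exact (mul_le_mul_of_nonneg_right hKτ (by positivity)).trans
      (mul_norm_sq_le_energyDensity_cos hτ x)
  have hsin := (mul_le_mul_of_nonneg_right hK (integral_nonneg fun _ => by positivity)).trans
    (rayleighInf_mul_le_of_tsupport_subset (fun _ _ => energyDensity_nonneg _ _)
      (fun _ _ => energyDensity_eq_zero_of_notMem_tsupport) (hu.ofReal_mul hf.sin)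
      (tsupport_sin_cutoffAngle_subset V u hτ))
  rw [sub_mul, sub_le_iff_le_add, ← integral_norm_sq_cos_add_sin hf hu, mul_add]
  refine (add_le_add hcos hsin).trans ?_
  rw [integral_norm_sq_cos_add_sin hf hu]
  exact integral_energyDensity_cos_add_sin_le hA hV hf hC hu

end Localisation

/-- Far from the boundary of `{0 < V}` the fibres do not see it, so that their energies approach the
one of the problem on `E × ℝ` without it. -/
lemma tendsto_rayleighInf_restrict {E ι : Type*} [NormedAddCommGroup E] [NormedSpace ℝ E]
    [FiniteDimensional ℝ E] [MeasurableSpace E] [BorelSpace E] [Fintype ι] {ν : Measure E}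
    [IsLocallyFiniteMeasure ν] [NeZero ν] (A : E →L[ℝ] E →L[ℝ] ℝ) {V : E →L[ℝ] ℝ} (e : ι → E)
    {w : E} (hν : ∀ a : ℝ, MeasurePreserving (· - a • w) ν ν) (hVw : 0 < V w) :
    Tendsto
      (fun τ => rayleighInf (ν.restrict {x | 0 < V x}) (energyDensity A (fun x => V x - τ) e))
      atTop
      (𝓝 (rayleighInf (ν.prod volume) (energyDensity (prodPotential A V) 0 (prodFrame e)))) := by
  set K := rayleighInf (ν.prod volume) (energyDensity (prodPotential A V) 0 (prodFrame e))
  have hneZero := neZero_restrict_pos hν hVw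
  refine tendsto_order.2 ⟨fun K' hK' => ?_, fun K' => eventually_rayleighInf_restrict_lt hν hVw⟩
  obtain ⟨C, hC⟩ := exists_sum_fderiv_cutoffAngle_sq_le V e
  have herror : Tendsto (fun τ : ℝ => K - C / τ ^ 2) atTop (𝓝 K) := by
    simpa using (tendsto_const_nhds (x := C)).div_atTop (tendsto_pow_atTop two_ne_zero)
      |>.const_sub K
  have hfar : ∀ᶠ τ : ℝ in atTop, K ≤ τ ^ 2 / 4 :=
    ((tendsto_pow_atTop two_ne_zero).atTop_div_const four_pos).eventually_ge_atTop K
  filter_upwards [herror.eventually_const_lt hK', hfar, eventually_gt_atTop 0] with τ hlt hKτ hτ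
  exact hlt.trans_le (le_rayleighInf_restrict A.continuous hτ (hC τ)
    ((le_rayleighInf_prod_iff A.contDiff V.contDiff).1 le_rfl τ) hKτ)

section Measure

lemma measurePreserving_of_involutive {E : Type*} [NormedAddCommGroup E] [NormedSpace ℝ E]
    [FiniteDimensional ℝ E] [MeasurableSpace E] [BorelSpace E] (μ : Measure E)
    [μ.IsAddHaarMeasure] {f : E →ₗ[ℝ] E} (hf : Function.Involutive f) :
    MeasurePreserving f μ μ := by
  have hdet : LinearMap.det f * LinearMap.det f = 1 := by
    rw [← LinearMap.det_comp, show f ∘ₗ f = LinearMap.id from LinearMap.ext hf, LinearMap.det_id]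
  have habs : |(LinearMap.det f)⁻¹| = 1 := by
    rw [abs_inv, inv_eq_one, ← abs_one, ← sq_eq_sq_iff_abs_eq_abs, one_pow, sq, hdet]
  refine ⟨f.continuous_of_finiteDimensional.measurable, ?_⟩
  rw [Measure.map_linearMap_addHaar_eq_smul_addHaar _ (left_ne_zero_of_mul_eq_one hdet), habs,
    ENNReal.ofReal_one, one_smul]

lemma ae_ne_zero {E : Type*} [NormedAddCommGroup E] [NormedSpace ℝ E]
    [FiniteDimensional ℝ E] [MeasurableSpace E] [BorelSpace E] (μ : Measure E)
    [μ.IsAddHaarMeasure] {f : E →ₗ[ℝ] ℝ} (hf : f ≠ 0) : ∀ᵐ x ∂μ, f x ≠ 0 :=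
  measure_mono_null (fun x hx => not_not.1 hx)
    (Measure.addHaar_submodule μ (LinearMap.ker f) (by rwa [ne_eq, LinearMap.ker_eq_top]))

end Measure

section Sector

/-- The standard frame of the plane. -/
def planeFrame : Fin 2 → ℝ × ℝ := ![(1, 0), (0, 1)]

/-- The planar potential `b₃ x₂ dx₁`. -/
def planePotential (b3 : ℝ) : ℝ × ℝ →L[ℝ] ℝ × ℝ →L[ℝ] ℝ :=
  (b3 • ContinuousLinearMap.snd ℝ ℝ ℝ).smulRight (ContinuousLinearMap.fst ℝ ℝ ℝ)

/-- The component `x₁ b₂ - x₂ b₁` of the potential along the axis of the wedge. -/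
def axialPotential (b1 b2 : ℝ) : ℝ × ℝ →L[ℝ] ℝ :=
  b2 • ContinuousLinearMap.fst ℝ ℝ ℝ - b1 • ContinuousLinearMap.snd ℝ ℝ ℝ

lemma planePotential_apply (b3 : ℝ) (x y : ℝ × ℝ) : planePotential b3 x y = b3 * x.2 * y.1 := by
  simp [planePotential]

lemma axialPotential_apply (b1 b2 : ℝ) (x : ℝ × ℝ) :
    axialPotential b1 b2 x = x.1 * b2 - x.2 * b1 := by
  simp [axialPotential, mul_comm]

lemma bandFn_eq_rayleighInf (α b1 b2 b3 τ : ℝ) :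
    bandFn α b1 b2 b3 τ = rayleighInf (volume.restrict (sector α))
      (energyDensity (planePotential b3) (fun x => axialPotential b1 b2 x - τ) planeFrame) := by
  have hdensity : ∀ (u : ℝ × ℝ → ℂ) x, energyDensity (planePotential b3)
      (fun x => axialPotential b1 b2 x - τ) planeFrame u x
      = ‖(-I) * fderiv ℝ u x (1, 0) + ((x.2 * b3 : ℝ) : ℂ) * u x‖ ^ 2
        + ‖fderiv ℝ u x (0, 1)‖ ^ 2 + (x.1 * b2 - x.2 * b1 - τ) ^ 2 * ‖u x‖ ^ 2 := fun u x => by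
    simp [energyDensity, planeFrame, covDeriv_apply, planePotential_apply, axialPotential_apply,
      mul_comm b3]
  simp only [bandFn, specInf2D, rayleighInf, rayleighQuotients, energy2D, norm2D, hdensity,
    isTestFunction_iff, and_assoc]

lemma setOf_axialPotential_pos {α s : ℝ} (hs : 0 < s) (hc : 0 < Real.cos (α / 2)) :
    {x | 0 < axialPotential (s * Real.cos (α / 2)) (s * Real.sin (α / 2)) x} = hpUp α := by
  ext x
  rw [mem_ofPred_eq, axialPotential_apply, hpUp, mem_ofPred_eq, Real.tan_eq_sin_div_cos,
    mul_div_assoc', lt_div_iff₀ hc,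
    show x.1 * (s * Real.sin (α / 2)) - x.2 * (s * Real.cos (α / 2))
      = s * (x.1 * Real.sin (α / 2) - x.2 * Real.cos (α / 2)) by ring, mul_pos_iff_of_pos_left hs,
    sub_pos]

lemma sector_ae_eq (α : ℝ) : sector α =ᵐ[volume] (hpUp α ∩ hpLow α : Set (ℝ × ℝ)) := by
  let f (t : ℝ) : ℝ × ℝ →ₗ[ℝ] ℝ := LinearMap.snd ℝ ℝ ℝ - t • LinearMap.fst ℝ ℝ ℝ
  have hf : ∀ t, f t ≠ 0 := fun t h => by simpa [f] using LinearMap.congr_fun h (0, 1)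
  filter_upwards [ae_ne_zero volume (hf (Real.tan (α / 2))),
    ae_ne_zero volume (hf (-Real.tan (α / 2)))] with x hup hlow
  simp only [f, LinearMap.sub_apply, LinearMap.smul_apply, LinearMap.snd_apply,
    LinearMap.fst_apply, smul_eq_mul, ne_eq] at hup hlow
  refine propext ⟨fun hx => ?_, fun hx => abs_le.2 ⟨hx.2.le, hx.1.le⟩⟩
  obtain ⟨hlow', hup'⟩ := abs_le.1 (show |x.2| ≤ x.1 * Real.tan (α / 2) from hx)
  exact ⟨lt_of_le_of_ne hup' fun h => hup (by rw [h]; ring),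
    lt_of_le_of_ne hlow' fun h => hlow (by rw [← h]; ring)⟩

lemma restrict_hpLow_restrict {α s : ℝ} (hs : 0 < s) (hc : 0 < Real.cos (α / 2)) :
    (volume.restrict (hpLow α)).restrict
      {x | 0 < axialPotential (s * Real.cos (α / 2)) (s * Real.sin (α / 2)) x}
      = volume.restrict (sector α) := by
  have hmeas : MeasurableSet (hpUp α) := (isOpen_lt continuous_snd (by fun_prop)).measurableSet
  rw [setOf_axialPotential_pos hs hc, Measure.restrict_restrict hmeas,
    Measure.restrict_congr_set (sector_ae_eq α)]

lemma isOpen_hpLow (α : ℝ) : IsOpen (hpLow α) :=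
  isOpen_lt (by fun_prop) continuous_snd

lemma neZero_restrict_hpLow (α : ℝ) : NeZero (volume.restrict (hpLow α) : Measure (ℝ × ℝ)) := by
  refine ⟨fun h => ?_⟩
  have := (isOpen_hpLow α).measure_pos volume ⟨(0, 1), by simp [hpLow]⟩
  simp_all

lemma measurePreserving_hpLow {α : ℝ} (hc : Real.cos (α / 2) ≠ 0) (a : ℝ) :
    MeasurePreserving (· - a • ((Real.cos (α / 2), -Real.sin (α / 2)) : ℝ × ℝ))
      (volume.restrict (hpLow α)) (volume.restrict (hpLow α)) := by
  have h := (measurePreserving_sub_right (volume : Measure (ℝ × ℝ))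
    (a • ((Real.cos (α / 2), -Real.sin (α / 2)) : ℝ × ℝ))).restrict_preimage
      (isOpen_hpLow α).measurableSet
  convert h using 2
  ext x
  simp only [hpLow, mem_preimage, mem_ofPred_eq, Prod.fst_sub, Prod.snd_sub, Prod.smul_mk,
    smul_eq_mul]
  have htan : a * (Real.tan (α / 2) * Real.cos (α / 2)) = a * Real.sin (α / 2) := by
    rw [Real.tan_mul_cos hc]
  constructor <;> intro h <;> linarith

end Sector

section HalfSpace

/-- The standard frame of the space. -/
def spaceFrame : Fin 3 → ℝ × ℝ × ℝ := ![(1, 0, 0), (0, 1, 0), (0, 0, 1)]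

/-- The potential `(s sin θ - t cos θ) dz` in the coordinates `(s, t, z)`; its field makes the
angle `θ` with the plane `t = 0`. -/
def halfSpacePotential (θ : ℝ) : ℝ × ℝ × ℝ →L[ℝ] ℝ × ℝ × ℝ →L[ℝ] ℝ :=
  ((axialPotential (Real.cos θ) (Real.sin θ)).comp
    (.prodMap (.id ℝ ℝ) (.fst ℝ ℝ ℝ))).smulRight
    ((.snd ℝ ℝ ℝ : ℝ × ℝ →L[ℝ] ℝ).comp (.snd ℝ ℝ (ℝ × ℝ)))

lemma halfSpacePotential_apply (θ : ℝ) (x y : ℝ × ℝ × ℝ) :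
    halfSpacePotential θ x y = (x.1 * Real.sin θ - x.2.1 * Real.cos θ) * y.2.2 := by
  simp [halfSpacePotential, axialPotential_apply]

lemma sigmaHS_eq_rayleighInf (θ : ℝ) :
    sigmaHS θ = rayleighInf (volume.restrict halfSpace3)
      (energyDensity (halfSpacePotential θ) 0 spaceFrame) := by
  have hdensity : ∀ (u : ℝ × ℝ × ℝ → ℂ) x, energyDensity (halfSpacePotential θ) 0 spaceFrame u x
      = ‖fderiv ℝ u x (1, 0, 0)‖ ^ 2 + ‖fderiv ℝ u x (0, 1, 0)‖ ^ 2
            + ‖(-I) * fderiv ℝ u x (0, 0, 1)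
                - ((x.2.1 * Real.cos θ : ℝ) : ℂ) * u x
                + ((x.1 * Real.sin θ : ℝ) : ℂ) * u x‖ ^ 2 := fun u x => by
    simp [energyDensity, spaceFrame, covDeriv_apply, halfSpacePotential_apply, Fin.sum_univ_three,
      sub_mul, sub_add_eq_add_sub, add_sub_assoc]
  simp only [sigmaHS, rayleighInf, rayleighQuotients, hdensity, isTestFunction_iff, and_assoc]

/-- The reflection of the `(s, t)`-plane which maps the axis `t` to the inner normal of the lower
face of the wedge of opening `2 β`. -/
def faceReflection (β : ℝ) : ℝ × ℝ × ℝ →ₗ[ℝ] ℝ × ℝ × ℝ where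
  toFun x := (-Real.cos β * x.1 + Real.sin β * x.2.1, Real.sin β * x.1 + Real.cos β * x.2.1, x.2.2)
  map_add' x y := by ext <;> simp <;> ring
  map_smul' r x := by ext <;> simp <;> ring

/-- The reflection of the `(s, z)`-plane which maps the axis `z` to the direction
`(sin ψ, cos ψ)`. -/
def tangentReflection (ψ : ℝ) : ℝ × ℝ × ℝ →ₗ[ℝ] ℝ × ℝ × ℝ where
  toFun x := (-Real.cos ψ * x.1 + Real.sin ψ * x.2.2, x.2.1, Real.sin ψ * x.1 + Real.cos ψ * x.2.2)
  map_add' x y := by ext <;> simp <;> ring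
  map_smul' r x := by ext <;> simp <;> ring

lemma involutive_faceReflection (β : ℝ) : Function.Involutive (faceReflection β) := fun x => by
  have h := Real.sin_sq_add_cos_sq β
  ext
  · simp only [faceReflection, LinearMap.coe_mk, AddHom.coe_mk]
    linear_combination x.1 * h
  · simp only [faceReflection, LinearMap.coe_mk, AddHom.coe_mk]
    linear_combination x.2.1 * h
  · rfl

lemma involutive_tangentReflection (ψ : ℝ) :
    Function.Involutive (tangentReflection ψ) := fun x => by
  have h := Real.sin_sq_add_cos_sq ψ
  ext
  · simp only [tangentReflection, LinearMap.coe_mk, AddHom.coe_mk]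
    linear_combination x.1 * h
  · rfl
  · simp only [tangentReflection, LinearMap.coe_mk, AddHom.coe_mk]
    linear_combination x.2.2 * h

/-- The rotation of the space which maps the half-space `t > 0` to the product of `hpLow (2 * β)`
with the axis of the wedge, `ψ` being the angle between this axis and the image of the axis `z`. -/
def faceRotation (β ψ : ℝ) : (ℝ × ℝ × ℝ) ≃L[ℝ] (ℝ × ℝ) × ℝ :=
  (((LinearEquiv.ofInvolutive _ (involutive_tangentReflection ψ)).trans
    (LinearEquiv.ofInvolutive _ (involutive_faceReflection β))).toContinuousLinearEquiv).trans
    (ContinuousLinearEquiv.prodAssoc ℝ ℝ ℝ ℝ).symm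

lemma faceRotation_apply (β ψ : ℝ) (x : ℝ × ℝ × ℝ) :
    faceRotation β ψ x =
      ((Real.cos β * (Real.cos ψ * x.1 - Real.sin ψ * x.2.2) + Real.sin β * x.2.1,
        -Real.sin β * (Real.cos ψ * x.1 - Real.sin ψ * x.2.2) + Real.cos β * x.2.1),
        Real.sin ψ * x.1 + Real.cos ψ * x.2.2) := by
  have h : faceRotation β ψ x = (ContinuousLinearEquiv.prodAssoc ℝ ℝ ℝ ℝ).symm
    (faceReflection β (tangentReflection ψ x)) := rfl
  rw [h]
  simp only [tangentReflection, faceReflection, LinearMap.coe_mk, AddHom.coe_mk,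
    ContinuousLinearEquiv.prodAssoc_symm_apply]
  ext <;> ring

lemma measurePreserving_faceRotation (β ψ : ℝ) :
    MeasurePreserving (faceRotation β ψ) volume volume :=
  have : (volume : Measure (ℝ × ℝ × ℝ)).IsAddHaarMeasure :=
    inferInstanceAs ((volume : Measure ℝ).prod (volume : Measure (ℝ × ℝ))).IsAddHaarMeasure
  (volume_preserving_prodAssoc.symm MeasurableEquiv.prodAssoc).comp
    ((measurePreserving_of_involutive volume (involutive_faceReflection β)).comp
      (measurePreserving_of_involutive volume (involutive_tangentReflection ψ)))

lemma faceRotation_preimage_hpLow {α : ℝ} (hc : 0 < Real.cos (α / 2)) (ψ : ℝ) :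
    faceRotation (α / 2) ψ ⁻¹' (hpLow α ×ˢ univ) = halfSpace3 := by
  ext x
  simp only [mem_preimage, mem_prod, mem_univ, and_true, hpLow, halfSpace3, mem_ofPred_eq,
    faceRotation_apply]
  have htan := Real.tan_mul_cos hc.ne'
  have hcs := Real.sin_sq_add_cos_sq (α / 2)
  rw [← mul_lt_mul_iff_right₀ hc, ← sub_pos]
  refine iff_of_eq (congrArg (0 < ·) ?_)
  linear_combination (Real.cos (α / 2) * (Real.cos ψ * x.1 - Real.sin ψ * x.2.2)
    + Real.sin (α / 2) * x.2.1) * htan + x.2.1 * hcs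

lemma measurePreserving_faceRotation_restrict {α : ℝ} (hc : 0 < Real.cos (α / 2)) (ψ : ℝ) :
    MeasurePreserving (faceRotation (α / 2) ψ) (volume.restrict halfSpace3)
      ((volume.restrict (hpLow α)).prod volume) := by
  have h := (measurePreserving_faceRotation (α / 2) ψ).restrict_preimage
    ((isOpen_hpLow α).measurableSet.prod MeasurableSet.univ)
  rwa [faceRotation_preimage_hpLow hc, Measure.volume_eq_prod (ℝ × ℝ) ℝ,
    ← Measure.prod_restrict, Measure.restrict_univ] at h

lemma norm_sq_rotation (φ : ℝ) (a b : ℂ) :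
    ‖Real.cos φ * a + Real.sin φ * b‖ ^ 2 + ‖-Real.sin φ * a + Real.cos φ * b‖ ^ 2
      = ‖a‖ ^ 2 + ‖b‖ ^ 2 := by
  simp only [Complex.sq_norm, Complex.normSq_apply, Complex.add_re, Complex.add_im,
    Complex.re_ofReal_mul, Complex.im_ofReal_mul, ← Complex.ofReal_neg]
  linear_combination (a.re ^ 2 + a.im ^ 2 + b.re ^ 2 + b.im ^ 2) * Real.sin_sq_add_cos_sq φ

lemma energyDensity_faceRotation_spaceFrame (A : (ℝ × ℝ) × ℝ → (ℝ × ℝ) × ℝ →L[ℝ] ℝ)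
    (V : (ℝ × ℝ) × ℝ → ℝ) (β ψ : ℝ) :
    energyDensity A V (faceRotation β ψ ∘ spaceFrame)
      = energyDensity A V (prodFrame planeFrame) := by
  refine energyDensity_congr_frame fun T => ?_
  let X := T ((1, 0), 0)
  let Y := T ((0, 1), 0)
  let Z := T ((0, 0), 1)
  let W : ℂ := -Real.sin β * Y + Real.cos β * X
  have hT : ∀ a b c : ℝ, T ((a, b), c) = a * X + b * Y + c * Z := fun a b c => by
    rw [show (((a, b), c) : (ℝ × ℝ) × ℝ) = a • ((1, 0), 0) + b • ((0, 1), 0) + c • ((0, 0), 1) by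
      simp]
    simp only [map_add, map_smul, Complex.real_smul, X, Y, Z]
  have hs : T (faceRotation β ψ (1, 0, 0)) = Real.cos ψ * W + Real.sin ψ * Z := by
    simp only [faceRotation_apply, hT, W]
    push_cast
    ring
  have ht : T (faceRotation β ψ (0, 1, 0)) = Real.cos β * Y + Real.sin β * X := by
    simp only [faceRotation_apply, hT]
    push_cast
    ring
  have hz : T (faceRotation β ψ (0, 0, 1)) = -Real.sin ψ * W + Real.cos ψ * Z := by
    simp only [faceRotation_apply, hT, W]
    push_cast
    ring
  calc ∑ i, ‖T ((faceRotation β ψ ∘ spaceFrame) i)‖ ^ 2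
      = ‖Real.cos ψ * W + Real.sin ψ * Z‖ ^ 2 + ‖Real.cos β * Y + Real.sin β * X‖ ^ 2
        + ‖-Real.sin ψ * W + Real.cos ψ * Z‖ ^ 2 := by
        rw [← hs, ← ht, ← hz]
        exact Fin.sum_univ_three _
    _ = ‖Z‖ ^ 2 + (‖X‖ ^ 2 + ‖Y‖ ^ 2) := by
        linear_combination norm_sq_rotation ψ W Z + norm_sq_rotation β Y X
    _ = ∑ j, ‖T (prodFrame planeFrame j)‖ ^ 2 := by
        rw [Fintype.sum_option, Fin.sum_univ_two]
        rfl

lemma rayleighInf_prod_hpLow_eq_sigmaHS {α b1 b2 b3 θ ψ : ℝ} (hc : 0 < Real.cos (α / 2))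
    (hnormal : b1 * Real.sin (α / 2) + b2 * Real.cos (α / 2) = Real.sin θ)
    (htangent : b1 * Real.cos (α / 2) - b2 * Real.sin (α / 2) = Real.cos θ * Real.cos ψ)
    (haxis : b3 = Real.cos θ * Real.sin ψ) :
    rayleighInf ((volume.restrict (hpLow α)).prod volume)
      (energyDensity (prodPotential (planePotential b3) (axialPotential b1 b2)) 0
        (prodFrame planeFrame)) = sigmaHS θ := by
  let L := (faceRotation (α / 2) ψ : (ℝ × ℝ × ℝ) →L[ℝ] (ℝ × ℝ) × ℝ)
  let B : (ℝ × ℝ) × ℝ →L[ℝ] (ℝ × ℝ) × ℝ →L[ℝ] ℝ :=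
    (planePotential b3).bilinearComp (.fst ℝ _ ℝ) (.fst ℝ _ ℝ)
      + ((axialPotential b1 b2).comp (.fst ℝ _ ℝ)).smulRight (.snd ℝ (ℝ × ℝ) ℝ)
  have hB : prodPotential (planePotential b3) (axialPotential b1 b2) = B := by
    ext x <;> simp [B, prodPotential]
  have hcomp : (fun x => (B (faceRotation (α / 2) ψ x)).comp L) = B.bilinearComp L L := rfl
  rw [hB, ← energyDensity_faceRotation_spaceFrame _ _ (α / 2) ψ, sigmaHS_eq_rayleighInf,
    ← rayleighInf_comp_continuousLinearEquiv _ (measurePreserving_faceRotation_restrict hc ψ),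
    hcomp]
  refine rayleighInf_congr_curl fun x y => ?_
  simp only [ContinuousLinearMap.bilinearComp_apply, ContinuousLinearEquiv.coe_coe,
    faceRotation_apply, add_apply, ContinuousLinearMap.smulRight_apply,
    ContinuousLinearMap.comp_apply, ContinuousLinearMap.coe_fst', axialPotential_apply,
    planePotential_apply, smul_apply, ContinuousLinearMap.coe_snd', smul_eq_mul,
    halfSpacePotential_apply, B, L]
  let st := x.1 * y.2.1 - x.2.1 * y.1
  let sz := x.1 * y.2.2 - x.2.2 * y.1
  let tz := x.2.1 * y.2.2 - x.2.2 * y.2.1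
  linear_combination
    -b3 * (Real.cos ψ * st + Real.sin ψ * tz) * Real.sin_sq_add_cos_sq (α / 2)
    + ((b1 * Real.sin (α / 2) + b2 * Real.cos (α / 2)) * sz - Real.cos θ * tz)
      * Real.sin_sq_add_cos_sq ψ
    + sz * hnormal + (Real.sin ψ * st - Real.cos ψ * tz) * htangent
    - (Real.cos ψ * st + Real.sin ψ * tz) * haxis

lemma exists_angle_eq_cos_mul_and_sin_mul {θ a b : ℝ} (h : a ^ 2 + b ^ 2 = Real.cos θ ^ 2)
    (hθ : 0 ≤ Real.cos θ) : ∃ ψ, a = Real.cos θ * Real.cos ψ ∧ b = Real.cos θ * Real.sin ψ := by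
  have hnorm : ‖(⟨a, b⟩ : ℂ)‖ = Real.cos θ := by
    rw [← abs_of_nonneg hθ, ← abs_of_nonneg (norm_nonneg _), ← sq_eq_sq_iff_abs_eq_abs, ← h,
      Complex.sq_norm, Complex.normSq_mk, sq, sq]
  refine ⟨Complex.arg ⟨a, b⟩, ?_, ?_⟩
  · rw [← hnorm, Complex.norm_mul_cos_arg]
  · rw [← hnorm, Complex.norm_mul_sin_arg]

end HalfSpace

section Angles

lemma sin_arcsin_sin_mul_sin (α γ : ℝ) :
    Real.sin (Real.arcsin (Real.sin α * Real.sin γ)) = Real.sin α * Real.sin γ := by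
  refine Real.sin_arcsin' (abs_le.1 ?_)
  rw [abs_mul]
  exact mul_le_one₀ (Real.abs_sin_le_one α) (abs_nonneg _) (Real.abs_sin_le_one γ)

lemma exists_tangential_angle (α γ : ℝ) :
    ∃ ψ, Real.sin γ * Real.cos α = Real.cos (Real.arcsin (Real.sin α * Real.sin γ)) * Real.cos ψ
      ∧ Real.cos γ = Real.cos (Real.arcsin (Real.sin α * Real.sin γ)) * Real.sin ψ := by
  refine exists_angle_eq_cos_mul_and_sin_mul ?_ (Real.cos_arcsin_nonneg _)
  rw [Real.cos_sq' (Real.arcsin _), sin_arcsin_sin_mul_sin]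
  linear_combination Real.sin_sq_add_cos_sq γ + Real.sin γ ^ 2 * Real.sin_sq_add_cos_sq α

lemma sin_eq_two_mul_half (α : ℝ) : Real.sin α = 2 * Real.sin (α / 2) * Real.cos (α / 2) := by
  rw [← Real.sin_two_mul, mul_div_cancel₀ α two_ne_zero]

lemma axialPotential_pos {α γ : ℝ} (hα : 0 < Real.sin α) (hγ : 0 < Real.sin γ) :
    0 < axialPotential (Real.sin γ * Real.cos (α / 2)) (Real.sin γ * Real.sin (α / 2))
      (Real.cos (α / 2), -Real.sin (α / 2)) := by
  rw [axialPotential_apply]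
  linear_combination mul_pos hγ hα + Real.sin γ * sin_eq_two_mul_half α

lemma rayleighInf_prod_hpLow_eq_sigmaHS_arcsin {α : ℝ} (hc : 0 < Real.cos (α / 2)) (γ : ℝ) :
    rayleighInf ((volume.restrict (hpLow α)).prod volume)
      (energyDensity (prodPotential (planePotential (Real.cos γ))
        (axialPotential (Real.sin γ * Real.cos (α / 2)) (Real.sin γ * Real.sin (α / 2)))) 0
        (prodFrame planeFrame)) = sigmaHS (Real.arcsin (Real.sin α * Real.sin γ)) := by
  obtain ⟨ψ, htangent, haxis⟩ := exists_tangential_angle α γ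
  have hcosα : Real.cos α = Real.cos (α / 2) ^ 2 - Real.sin (α / 2) ^ 2 := by
    rw [← Real.cos_two_mul', mul_div_cancel₀ α two_ne_zero]
  refine rayleighInf_prod_hpLow_eq_sigmaHS hc ?_ ?_ haxis
  · rw [sin_arcsin_sin_mul_sin]
    linear_combination -Real.sin γ * sin_eq_two_mul_half α
  · linear_combination htangent - Real.sin γ * hcosα

end Angles

end MagWedge

open MagWedge in
/-- `lim_{τ→+∞} s(B;α,τ) = σ(arcsin(sin α · sin γ))`. -/
theorem bandFn_tendsto_sigma (α γ : ℝ) (hα : α ∈ Set.Ioo 0 π) (hγ : γ ∈ Set.Ioc 0 (π / 2)) :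
    Filter.Tendsto
      (fun τ : ℝ => bandFn α
        (Real.sin γ * Real.cos (α / 2)) (Real.sin γ * Real.sin (α / 2)) (Real.cos γ) τ)
      Filter.atTop (nhds (sigmaHS (Real.arcsin (Real.sin α * Real.sin γ)))) := by
  have hsinα : 0 < Real.sin α := Real.sin_pos_of_mem_Ioo hα
  have hsinγ : 0 < Real.sin γ :=
    Real.sin_pos_of_pos_of_lt_pi hγ.1 (hγ.2.trans_lt (half_lt_self Real.pi_pos))
  have hcos : 0 < Real.cos (α / 2) :=
    Real.cos_pos_of_mem_Ioo ⟨by linarith [hα.1, Real.pi_pos], by linarith [hα.2]⟩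
  have := neZero_restrict_hpLow α
  have hlim := tendsto_rayleighInf_restrict (planePotential (Real.cos γ)) planeFrame
    (measurePreserving_hpLow hcos.ne') (axialPotential_pos hsinα hsinγ)
  rw [restrict_hpLow_restrict hsinγ hcos, rayleighInf_prod_hpLow_eq_sigmaHS_arcsin hcos] at hlim
  simpa only [bandFn_eq_rayleighInf] using hlim
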